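/- arXiv:2302.01077 — 6 statements merged into one kernel-verified Lean document; each statement's English description precedes it below -/
import Mathlib

section
/- For distinct X, Y ∈ G_∞(H) the following conditions are equivalent: (1) X and Y are adjacent; (2) there are infinitely many Z ∈ G_∞(H) ortho-adjacent to both X and Y with the property that there are infinitely many Z' ∈ G_∞(H) ortho-adjacent to each of X, Y and Z. -/
open Module Submodule Classical

variable {H : Type*} [NormedAddCommGroup H] [InnerProductSpace ℂ H] [CompleteSpace H]

/-- The orthogonal projection of `H` onto a closed subspace `K`, as a map `H →L[ℂ] H`
(defined to be `0` if `K` is not closed). -/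
noncomputable def projCLM (K : Submodule ℂ H) : H →L[ℂ] H :=
  if h : IsClosed (K : Set H) then
    haveI : CompleteSpace K := h.completeSpace_coe
    K.subtypeL.comp (orthogonalProjection K)
  else 0

/-- Two (closed) subspaces are compatible if their orthogonal projections commute. -/
def Compatible (K L : Submodule ℂ H) : Prop := Commute (projCLM K) (projCLM L)

/-- `W` is a subspace of `X` of finite codimension `n` in `X`. -/
def CodimIn (W X : Submodule ℂ H) (n : ℕ) : Prop :=
  W ≤ X ∧ FiniteDimensional ℂ (↥X ⧸ W.comap X.subtype) ∧
    finrank ℂ (↥X ⧸ W.comap X.subtype) = n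

/-- `X` and `Y` are adjacent: `X ∩ Y` is a hyperplane in both `X` and `Y`. -/
def Adjacent (X Y : Submodule ℂ H) : Prop :=
  CodimIn (X ⊓ Y) X 1 ∧ CodimIn (X ⊓ Y) Y 1

/-- `X` and `Y` are ortho-adjacent: adjacent and compatible. -/
def OrthoAdjacent (X Y : Submodule ℂ H) : Prop := Adjacent X Y ∧ Compatible X Y

/-- The Grassmannian `G_∞(H)` of closed subspaces of `H` whose dimension and
codimension both are infinite. -/
def Ginf : Set (Submodule ℂ H) :=
  {X | IsClosed (X : Set H) ∧ ¬FiniteDimensional ℂ X ∧ ¬FiniteDimensional ℂ Xᗮ}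

/-- `X ∩ Y` has the same finite codimension in both `X` and `Y`. -/
def SameFinCodim (X Y : Submodule ℂ H) : Prop :=
  ∃ n : ℕ, CodimIn (X ⊓ Y) X n ∧ CodimIn (X ⊓ Y) Y n

/-- An `A`-component of `G_∞(H)`: a set of elements pairwise at the same finite
codimension, maximal with respect to this property. -/
def IsAComponent (C : Set (Submodule ℂ H)) : Prop :=
  C ⊆ Ginf ∧ (∀ X ∈ C, ∀ Y ∈ C, SameFinCodim X Y) ∧
    ∀ D : Set (Submodule ℂ H), D ⊆ Ginf → (∀ X ∈ D, ∀ Y ∈ D, SameFinCodim X Y) →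
      C ⊆ D → D = C

/-- The star `S(X)`: all closed subspaces of `H` containing `X` as a hyperplane. -/
def starSet (X : Submodule ℂ H) : Set (Submodule ℂ H) :=
  {Y | IsClosed (Y : Set H) ∧ CodimIn X Y 1}

/-- The top `G¹(X)`: all closed hyperplanes of `X`. -/
def topSet (X : Submodule ℂ H) : Set (Submodule ℂ H) :=
  {M | IsClosed (M : Set H) ∧ CodimIn M X 1}

/-- The image `U(M)` of a subspace `M ⊆ X` under a linear isometry `U : X ≃ X'`,
viewed as a subspace of `H`. -/
def imL (X X' : Submodule ℂ H) (U : ↥X ≃ₗᵢ[ℂ] ↥X') (M : Submodule ℂ H) : Submodule ℂ H :=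
  Submodule.map X'.subtype (Submodule.map U.toLinearEquiv.toLinearMap (M.comap X.subtype))

/-- The image `U(M)` of a subspace `M ⊆ X` under a conjugate-linear isometry `U : X ≃ X'`,
viewed as a subspace of `H`. -/
def imC (X X' : Submodule ℂ H) (U : ↥X ≃ₗᵢ⋆[ℂ] ↥X') (M : Submodule ℂ H) : Submodule ℂ H :=
  Submodule.map X'.subtype (Submodule.map U.toLinearEquiv.toLinearMap (M.comap X.subtype))

/-- The Grassmannian `G_k(H)` of `k`-dimensional subspaces of `H`. -/
def Gk (k : ℕ) : Set (Submodule ℂ H) :=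
  {X | FiniteDimensional ℂ X ∧ finrank ℂ X = k}

/-- The Grassmannian `G^k(H)` of closed subspaces of `H` of codimension `k`. -/
def GCk (k : ℕ) : Set (Submodule ℂ H) :=
  {X | IsClosed (X : Set H) ∧ FiniteDimensional ℂ (H ⧸ X) ∧ finrank ℂ (H ⧸ X) = k}


theorem codimIn_one_iff (W X : Submodule ℂ H) : CodimIn W X 1 ↔ W ⋖ X := by
  constructor
  · rintro ⟨h1, h2, h3⟩
    rw [covBy_iff_quot_is_simple h1, isSimpleModule_iff_finrank_eq_one]
    exact h3
  · intro h
    refine ⟨h.le, ?_⟩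
    rw [covBy_iff_quot_is_simple h.le, isSimpleModule_iff_finrank_eq_one] at h
    exact ⟨FiniteDimensional.of_finrank_pos (by omega), h⟩

theorem adjacent_iff (X Y : Submodule ℂ H) : Adjacent X Y ↔ X ⊓ Y ⋖ X ∧ X ⊓ Y ⋖ Y := by
  unfold Adjacent
  rw [codimIn_one_iff, codimIn_one_iff]

theorem projCLM_mem {K : Submodule ℂ H} (h : IsClosed (K : Set H)) (v : H) :
    projCLM K v ∈ K := by
  unfold projCLM
  rw [dif_pos h]
  simp

theorem sub_projCLM_mem {K : Submodule ℂ H} (h : IsClosed (K : Set H)) (v : H) :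
    v - projCLM K v ∈ Kᗮ := by
  haveI : CompleteSpace K := h.completeSpace_coe
  unfold projCLM
  rw [dif_pos h]
  exact K.sub_starProjection_mem_orthogonal v

theorem eq_zero_of_both {K : Submodule ℂ H} {v : H} (h1 : v ∈ K) (h2 : v ∈ Kᗮ) : v = 0 := by
  have : v ∈ K ⊓ Kᗮ := ⟨h1, h2⟩
  rwa [K.inf_orthogonal_eq_bot, Submodule.mem_bot] at this

theorem projCLM_eq {K : Submodule ℂ H} (h : IsClosed (K : Set H)) {v p : H} (hp : p ∈ K)
    (hv : v - p ∈ Kᗮ) : projCLM K v = p := by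
  refine sub_eq_zero.1 (eq_zero_of_both (K := K) (K.sub_mem (projCLM_mem h v) hp) ?_)
  have := Kᗮ.sub_mem hv (sub_projCLM_mem h v)
  rwa [sub_sub_sub_cancel_left] at this

theorem compat_proj {K L : Submodule ℂ H} (hK : IsClosed (K : Set H)) (hL : IsClosed (L : Set H))
    (h : Compatible K L) {x : H} (hx : x ∈ K) : ∃ p, p ∈ K ∧ p ∈ L ∧ x - p ∈ Lᗮ := by
  refine ⟨projCLM L x, ?_, projCLM_mem hL x, sub_projCLM_mem hL x⟩
  have h1 : projCLM K x = x := projCLM_eq hK hx (by simp)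
  have h2 : projCLM K (projCLM L x) = projCLM L (projCLM K x) := congrArg (fun f => f x) h.eq
  rw [h1] at h2
  rw [← h2]
  exact projCLM_mem hK _

theorem proj_proj {W K L N : Submodule ℂ H} (hW : IsClosed (W : Set H))
    (hK : IsClosed (K : Set H)) (hL : IsClosed (L : Set H)) (hWK : W ≤ K) (hLN : L = W ⊔ N)
    (hN : N ≤ Kᗮ) (v : H) : projCLM K (projCLM L v) = projCLM W v := by
  have h1 := projCLM_mem hL v
  have h2 := sub_projCLM_mem hL v
  have hWL : W ≤ L := hLN ▸ le_sup_left
  obtain ⟨w, hw, n, hn, hwn⟩ := Submodule.mem_sup.1 (hLN.le h1)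
  rw [← hwn] at h2 ⊢
  rw [projCLM_eq hK (hWK hw) (by simpa using hN hn)]
  refine (projCLM_eq hW hw ?_).symm
  have : v - w = (v - (w + n)) + n := by abel
  rw [this]
  exact Wᗮ.add_mem (Submodule.orthogonal_le hWL h2) (Submodule.orthogonal_le hWK (hN hn))

theorem closed_sup_span {W : Submodule ℂ H} (hW : IsClosed (W : Set H)) (x : H) :
    IsClosed ((W ⊔ ℂ ∙ x : Submodule ℂ H) : Set H) :=
  Submodule.isClosed_sup_finiteDimensional _ _ hW

theorem span_le_orth {W : Submodule ℂ H} {x z : H} (hz : z ∈ Wᗮ) (hxz : inner ℂ x z = 0) :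
    (ℂ ∙ z) ≤ (W ⊔ ℂ ∙ x : Submodule ℂ H)ᗮ := by
  rw [Submodule.span_singleton_le_iff_mem, ← Submodule.inf_orthogonal]
  exact ⟨hz, Submodule.mem_orthogonal_singleton_iff_inner_right.2 hxz⟩

theorem covBy_sup_span {W : Submodule ℂ H} {x : H} (hx : x ∈ Wᗮ) (hx0 : x ≠ 0) :
    W ⋖ W ⊔ ℂ ∙ x := by
  rw [sup_comm]
  exact covBy_span_singleton_sup (fun h => hx0 (eq_zero_of_both h hx))

theorem orthoAdj_of {W : Submodule ℂ H} (hW : IsClosed (W : Set H)) {x z : H}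
    (hx : x ∈ Wᗮ) (hx0 : x ≠ 0) (hz : z ∈ Wᗮ) (hz0 : z ≠ 0) (hxz : inner ℂ x z = 0) :
    OrthoAdjacent (W ⊔ ℂ ∙ z) (W ⊔ ℂ ∙ x) := by
  have hzx : inner ℂ z x = 0 := inner_eq_zero_symm.1 hxz
  have hN := span_le_orth hz hxz
  have hN' := span_le_orth hx hzx
  have hinf : (W ⊔ ℂ ∙ z) ⊓ (W ⊔ ℂ ∙ x) = W := by
    rw [sup_inf_assoc_of_le _ (le_sup_left : W ≤ W ⊔ ℂ ∙ x)]
    have : (ℂ ∙ z) ⊓ (W ⊔ ℂ ∙ x) = ⊥ := by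
      rw [eq_bot_iff]
      intro v hv
      exact eq_zero_of_both hv.2 (hN hv.1)
    rw [this, sup_bot_eq]
  refine ⟨?_, ?_⟩
  · rw [adjacent_iff, hinf]
    exact ⟨covBy_sup_span hz hz0, covBy_sup_span hx hx0⟩
  · have h1 := closed_sup_span hW x
    have h2 := closed_sup_span hW z
    show _ * _ = _ * _
    ext v
    show projCLM _ (projCLM _ v) = projCLM _ (projCLM _ v)
    rw [proj_proj hW h1 h2 le_sup_left rfl hN, proj_proj hW h2 h1 le_sup_left rfl hN']

theorem exists_perp {W X : Submodule ℂ H} (hW : IsClosed (W : Set H)) (h : W ⋖ X) :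
    ∃ x, x ∈ Wᗮ ∧ x ≠ 0 ∧ X = W ⊔ ℂ ∙ x := by
  obtain ⟨y, hy, hyW⟩ := SetLike.exists_of_lt h.lt
  have h0 : y - projCLM W y ≠ 0 := by
    intro h0
    rw [sub_eq_zero.1 h0] at hyW
    exact hyW (projCLM_mem hW _)
  refine ⟨y - projCLM W y, sub_projCLM_mem hW y, h0, ?_⟩
  have h2 := covBy_sup_span (sub_projCLM_mem hW y) h0
  refine ((h.eq_or_eq h2.le (sup_le h.le ?_)).resolve_left h2.ne').symm
  rw [Submodule.span_singleton_le_iff_mem]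
  exact X.sub_mem hy (h.le (projCLM_mem hW y))

theorem inf_orth_infinite {N : Submodule ℂ H} (hN : ¬ N.FG) (z : H) : ¬ (N ⊓ (ℂ ∙ z)ᗮ).FG := by
  intro h
  apply hN
  refine Submodule.fg_of_fg_map_of_fg_inf_ker ((innerSL ℂ z : H →L[ℂ] ℂ) : H →ₗ[ℂ] ℂ)
    (IsNoetherian.noetherian _) ?_
  have e : LinearMap.ker ((innerSL ℂ z : H →L[ℂ] ℂ) : H →ₗ[ℂ] ℂ) = (ℂ ∙ z)ᗮ := by
    ext v
    rw [Submodule.mem_orthogonal_singleton_iff_inner_right]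
    simp
  rw [e]
  exact h

theorem infinite_lines {W N : Submodule ℂ H} (hN : ¬ N.FG) (hNW : N ≤ Wᗮ) :
    {Z : Submodule ℂ H | ∃ z ∈ N, z ≠ 0 ∧ Z = W ⊔ ℂ ∙ z}.Infinite := by
  intro hfin
  apply hN
  have : N = hfin.toFinset.sup (fun K => K ⊓ N) := by
    apply le_antisymm
    · intro z hz
      by_cases hz0 : z = 0
      · rw [hz0]; exact Submodule.zero_mem _
      have hm : (W ⊔ ℂ ∙ z) ∈ hfin.toFinset := by
        rw [Set.Finite.mem_toFinset]
        exact ⟨z, hz, hz0, rfl⟩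
      refine Finset.le_sup (f := fun K => K ⊓ N) hm ⟨?_, hz⟩
      exact (le_sup_right : _ ≤ W ⊔ ℂ ∙ z) (Submodule.mem_span_singleton_self z)
    · exact Finset.sup_le fun K _ => inf_le_right
  rw [this]
  refine Submodule.fg_finset_sup _ _ ?_
  intro K hK
  rw [Set.Finite.mem_toFinset] at hK
  obtain ⟨z, hz, hz0, rfl⟩ := hK
  have h1 : (W ⊔ ℂ ∙ z) ⊓ N = ℂ ∙ z := by
    rw [sup_comm, sup_inf_assoc_of_le _ ((Submodule.span_singleton_le_iff_mem _ _).2 hz)]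
    have : W ⊓ N = ⊥ := by
      rw [eq_bot_iff]
      intro v hv
      exact eq_zero_of_both hv.1 (hNW hv.2)
    rw [this, sup_bot_eq]
  rw [h1]
  exact Submodule.fg_span_singleton z

theorem not_fg_of_le {A B : Submodule ℂ H} (h : A ≤ B) (hA : ¬ A.FG) : ¬ B.FG := by
  intro hB
  apply hA
  rw [← Submodule.fg_top] at hB
  haveI : FiniteDimensional ℂ B := ⟨hB⟩
  exact Module.Finite.iff_fg.1 (Submodule.finiteDimensional_of_le h)

theorem mem_Ginf_iff (X : Submodule ℂ H) :
    X ∈ Ginf (H := H) ↔ IsClosed (X : Set H) ∧ ¬ X.FG ∧ ¬ Xᗮ.FG := by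
  unfold Ginf
  rw [Set.mem_setOf_eq, FiniteDimensional, FiniteDimensional, Module.Finite.iff_fg,
    Module.Finite.iff_fg]

theorem mem_Ginf_of {W N : Submodule ℂ H} (hW : IsClosed (W : Set H)) (hWi : ¬ W.FG)
    (hN : ¬ N.FG) (hNW : N ≤ Wᗮ) (z : H) : (W ⊔ ℂ ∙ z) ∈ Ginf (H := H) := by
  rw [mem_Ginf_iff]
  refine ⟨closed_sup_span hW z, not_fg_of_le le_sup_left hWi, ?_⟩
  rw [← Submodule.inf_orthogonal]
  exact not_fg_of_le (inf_le_inf_right _ hNW) (inf_orth_infinite hN z)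

theorem forward (X Y : Submodule ℂ H)
    (hX : X ∈ Ginf (H := H)) (hY : Y ∈ Ginf (H := H)) (h : Adjacent X Y) :
      {Z : Submodule ℂ H | Z ∈ Ginf (H := H) ∧ OrthoAdjacent Z X ∧ OrthoAdjacent Z Y ∧
        {Z' : Submodule ℂ H | Z' ∈ Ginf (H := H) ∧ OrthoAdjacent Z' X ∧ OrthoAdjacent Z' Y ∧
          OrthoAdjacent Z' Z}.Infinite}.Infinite := by
  rw [adjacent_iff] at h
  rw [mem_Ginf_iff] at hX hY
  have hW : IsClosed ((X ⊓ Y : Submodule ℂ H) : Set H) := hX.1.inter hY.1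
  generalize X ⊓ Y = W at *
  obtain ⟨x, hx, hx0, rfl⟩ := exists_perp hW h.1
  obtain ⟨y, hy, hy0, rfl⟩ := exists_perp hW h.2
  have hWi : ¬ W.FG := fun hf => hX.2.1 (hf.sup (Submodule.fg_span_singleton x))
  have hN := inf_orth_infinite hX.2.2 y
  rw [← Submodule.inf_orthogonal] at hN
  set N := (Wᗮ ⊓ (ℂ ∙ x)ᗮ) ⊓ (ℂ ∙ y)ᗮ with hNdef
  have hNW : N ≤ Wᗮ := fun v hv => hv.1.1
  have hNx : ∀ v ∈ N, inner ℂ x v = 0 := fun v hv =>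
    Submodule.mem_orthogonal_singleton_iff_inner_right.1 hv.1.2
  have hNy : ∀ v ∈ N, inner ℂ y v = 0 := fun v hv =>
    Submodule.mem_orthogonal_singleton_iff_inner_right.1 hv.2
  refine (infinite_lines hN hNW).mono ?_
  rintro _ ⟨z, hz, hz0, rfl⟩
  refine ⟨mem_Ginf_of hW hWi hN hNW z, orthoAdj_of hW hx hx0 (hNW hz) hz0 (hNx z hz),
    orthoAdj_of hW hy hy0 (hNW hz) hz0 (hNy z hz), ?_⟩
  have hN2 := inf_orth_infinite hN z
  refine (infinite_lines (W := W) hN2 (inf_le_left.trans hNW)).mono ?_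
  rintro _ ⟨u, hu, hu0, rfl⟩
  exact ⟨mem_Ginf_of hW hWi hN hNW u, orthoAdj_of hW hx hx0 (hNW hu.1) hu0 (hNx u hu.1),
    orthoAdj_of hW hy hy0 (hNW hu.1) hu0 (hNy u hu.1),
    orthoAdj_of hW (hNW hz) hz0 (hNW hu.1) hu0
      (Submodule.mem_orthogonal_singleton_iff_inner_right.1 hu.2)⟩

/-- lattice part -/
theorem lattice_part {X Y Z : Submodule ℂ H} (hne : X ≠ Y) (hn : ¬ Adjacent X Y)
    (hX : Adjacent Z X) (hY : Adjacent Z Y) :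
    X ⊓ Y ⋖ Z ⊓ X ∧ X ⊓ Y ⋖ Z ⊓ Y ∧ Z = (Z ⊓ X) ⊔ (Z ⊓ Y) := by
  rw [adjacent_iff] at hn hX hY
  obtain ⟨hX1, hX2⟩ := hX
  obtain ⟨hY1, hY2⟩ := hY
  have hAB : Z ⊓ X ≠ Z ⊓ Y := by
    intro hAB
    have hle : Z ⊓ X ≤ X ⊓ Y := le_inf inf_le_right (hAB ▸ inf_le_right)
    rcases hX2.eq_or_eq hle inf_le_left with h | h
    · apply hn
      rw [h]
      exact ⟨hX2, hAB ▸ hY2⟩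
    · have hXY : X ≤ Y := inf_eq_left.1 h
      rw [← hAB] at hY2
      rcases hY2.eq_or_eq hX2.le hXY with h' | h'
      · exact hX2.ne' h'
      · exact hne h'
  have hsup : (Z ⊓ X) ⊔ (Z ⊓ Y) = Z := by
    rcases hX1.eq_or_eq le_sup_left (sup_le hX1.le hY1.le) with h | h
    · exfalso
      have : Z ⊓ Y ≤ Z ⊓ X := sup_eq_left.1 h
      rcases hY1.eq_or_eq this hX1.le with h' | h'
      · exact hAB h'
      · exact hX1.ne h'
    · exact h
  have h1 : (Z ⊓ X) ⊓ (Z ⊓ Y) ⋖ Z ⊓ X := inf_covBy_of_covBy_sup_right (by rw [hsup]; exact hY1)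
  have h2 : (Z ⊓ X) ⊓ (Z ⊓ Y) ⋖ Z ⊓ Y := inf_covBy_of_covBy_sup_left (by rw [hsup]; exact hX1)
  have e1 : (Z ⊓ X) ⊓ (X ⊓ Y) = (Z ⊓ X) ⊓ (Z ⊓ Y) := by
    ext v; simp only [Submodule.mem_inf]; tauto
  have e2 : (Z ⊓ Y) ⊓ (X ⊓ Y) = (Z ⊓ X) ⊓ (Z ⊓ Y) := by
    ext v; simp only [Submodule.mem_inf]; tauto
  have hWZ : X ⊓ Y ≤ Z := by
    by_contra hWZ
    apply hn
    constructor
    · have h3 : (Z ⊓ X) ⊔ (X ⊓ Y) = X :=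
        (hX2.eq_or_eq le_sup_left (sup_le inf_le_right inf_le_left)).resolve_left
          (fun h => hWZ ((sup_eq_left.1 h).trans inf_le_left))
      have := covBy_sup_of_inf_covBy_left (e1 ▸ h1)
      rwa [h3] at this
    · have h3 : (Z ⊓ Y) ⊔ (X ⊓ Y) = Y :=
        (hY2.eq_or_eq le_sup_left (sup_le inf_le_right inf_le_right)).resolve_left
          (fun h => hWZ ((sup_eq_left.1 h).trans inf_le_left))
      have := covBy_sup_of_inf_covBy_left (e2 ▸ h2)
      rwa [h3] at this
  have e3 : (Z ⊓ X) ⊓ (Z ⊓ Y) = X ⊓ Y := by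
    rw [← e1]
    exact inf_eq_right.2 (le_inf hWZ inf_le_left)
  rw [e3] at h1 h2
  exact ⟨h1, h2, hsup.symm⟩

theorem determined {X Y Z Z' : Submodule ℂ H} (hne : X ≠ Y) (hn : ¬ Adjacent X Y)
    (cX : IsClosed (X : Set H)) (cY : IsClosed (Y : Set H)) (cZ : IsClosed (Z : Set H))
    (cZ' : IsClosed (Z' : Set H))
    (hZX : OrthoAdjacent Z X) (hZY : OrthoAdjacent Z Y)
    (hZX' : OrthoAdjacent Z' X) (hZY' : OrthoAdjacent Z' Y) (hZZ : OrthoAdjacent Z' Z)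
    (hA : Z ⊓ X = Z' ⊓ X) : Z' = (Z ⊓ X) ⊔ (Y ⊓ (Z ⊓ Y)ᗮ) := by
  obtain ⟨hWA, hWB, hZ⟩ := lattice_part hne hn hZX.1 hZY.1
  obtain ⟨hWA', hWB', hZ'⟩ := lattice_part hne hn hZX'.1 hZY'.1
  have hzz := (adjacent_iff _ _).1 hZZ.1
  have hzx := (adjacent_iff _ _).1 hZX.1
  have hzy := (adjacent_iff _ _).1 hZY.1
  have hBB : Z ⊓ Y ≠ Z' ⊓ Y := by
    intro h
    have : Z = Z' := by rw [hZ, hZ', hA, h]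
    rw [this, inf_idem] at hzz
    exact hzz.1.ne rfl
  have hcW : IsClosed ((X ⊓ Y : Submodule ℂ H) : Set H) := cX.inter cY
  have hinf : ∀ v, v ∈ Z → v ∈ Z' → v ∈ Y → v ∈ X ⊓ Y := by
    intro v h1 h2 h3
    rcases hWB.eq_or_eq (le_inf hWB.le hWB'.le) (inf_le_left : (Z ⊓ Y) ⊓ (Z' ⊓ Y) ≤ _) with h | h
    · rw [← h]; exact ⟨⟨h1, h3⟩, h2, h3⟩
    · exfalso
      rcases hWB'.eq_or_eq hWB.le (inf_eq_left.1 h) with h' | h'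
      · exact hWB.ne' h'
      · exact hBB h'
  have hZZA : Z' ⊓ Z = Z ⊓ X := by
    have h1 : Z ⊓ X ≤ Z' ⊓ Z := le_inf (hA ▸ inf_le_left) inf_le_left
    exact (hzx.1.eq_or_eq h1 inf_le_right).resolve_right hzz.2.ne
  obtain ⟨b, hb, hb0, hB'⟩ := exists_perp hcW hWB'
  have hbB' : b ∈ Z' ⊓ Y := by
    rw [hB']; exact (le_sup_right : _ ≤ (X ⊓ Y) ⊔ ℂ ∙ b) (Submodule.mem_span_singleton_self b)
  have hbA : b ∈ (Z ⊓ X)ᗮ := by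
    rw [Submodule.mem_orthogonal]
    intro a ha
    have ha' : a ∈ Z' ⊓ X := hA ▸ ha
    obtain ⟨p, hp1, hp2, hp3⟩ := compat_proj cZ cY hZY.2 ha.1
    obtain ⟨q, hq1, hq2, hq3⟩ := compat_proj cZ' cY hZY'.2 ha'.1
    have hpq : p = q := by rw [← projCLM_eq cY hp2 hp3, ← projCLM_eq cY hq2 hq3]
    have hpW := hinf p hp1 (hpq ▸ hq1) hp2
    have e1 : inner ℂ p b = 0 := (Submodule.mem_orthogonal _ _).1 hb p hpW
    have e2 : inner ℂ (a - p) b = 0 := Submodule.inner_left_of_mem_orthogonal hbB'.2 hp3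
    rw [inner_sub_left, e1, sub_zero] at e2
    exact e2
  have hbZ : b ∈ Zᗮ := by
    obtain ⟨p, hp1, hp2, hp3⟩ := compat_proj cZ' cZ hZZ.2 hbB'.1
    have hpA : p ∈ Z ⊓ X := hZZA ▸ (⟨hp1, hp2⟩ : p ∈ Z' ⊓ Z)
    have h1 : b - p ∈ (Z ⊓ X)ᗮ := Submodule.orthogonal_le inf_le_left hp3
    have h2 : p ∈ (Z ⊓ X)ᗮ := by
      have := (Z ⊓ X)ᗮ.sub_mem hbA h1
      simpa using this
    have h0 := eq_zero_of_both hpA h2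
    rw [h0, sub_zero] at hp3
    exact hp3
  have hbB : b ∈ (Z ⊓ Y)ᗮ := Submodule.orthogonal_le inf_le_left hbZ
  have hYb : Y = (Z ⊓ Y) ⊔ ℂ ∙ b := by
    have h1 := covBy_sup_span hbB hb0
    exact ((hzy.2.eq_or_eq h1.le (sup_le inf_le_right
      ((Submodule.span_singleton_le_iff_mem _ _).2 hbB'.2))).resolve_left h1.ne').symm
  have hspan : Y ⊓ (Z ⊓ Y)ᗮ = ℂ ∙ b := by
    have : ((ℂ ∙ b) ⊔ (Z ⊓ Y)) ⊓ (Z ⊓ Y)ᗮ = ℂ ∙ b := by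
      rw [sup_inf_assoc_of_le _ ((Submodule.span_singleton_le_iff_mem _ _).2 hbB),
        Submodule.inf_orthogonal_eq_bot, sup_bot_eq]
    rwa [sup_comm, ← hYb] at this
  rw [hspan]
  rw [hB', ← sup_assoc, ← hA, sup_eq_left.2 hWA.le] at hZ'
  exact hZ'

theorem dichotomy {X Y Z Z' : Submodule ℂ H} (hne : X ≠ Y) (hn : ¬ Adjacent X Y)
    (hZX : Adjacent Z X) (hZY : Adjacent Z Y)
    (hZX' : Adjacent Z' X) (hZY' : Adjacent Z' Y) (hZZ : Adjacent Z' Z) :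
    Z ⊓ X = Z' ⊓ X ∨ Z ⊓ Y = Z' ⊓ Y := by
  obtain ⟨hWA, hWB, hZ⟩ := lattice_part hne hn hZX hZY
  obtain ⟨hWA', hWB', hZ'⟩ := lattice_part hne hn hZX' hZY'
  rw [adjacent_iff] at hZZ hZX hZY
  by_contra! hcon
  have key : ∀ {W A B : Submodule ℂ H}, W ⋖ A → W ⋖ B → A ≠ B → A ⊓ B = W := by
    intro W A B h1 h2 h3
    rcases h1.eq_or_eq (le_inf h1.le h2.le) inf_le_left with h | h
    · exact h
    · exfalso
      rcases h2.eq_or_eq h1.le (inf_eq_left.1 h) with h' | h'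
      · exact h1.ne' h'
      · exact h3 h'
  have kA := key hWA hWA' hcon.1
  have kB := key hWB hWB' hcon.2
  have hle : Z' ⊓ Z ≤ X ⊓ Y := by
    rintro u ⟨hu', hu⟩
    rw [hZ] at hu
    rw [hZ'] at hu'
    obtain ⟨a, ha, b, hb, rfl⟩ := Submodule.mem_sup.1 hu
    obtain ⟨a', ha', b', hb', he⟩ := Submodule.mem_sup.1 hu'
    have e : a - a' = b' - b := by
      rw [sub_eq_sub_iff_add_eq_add, ← he]; abel
    have hd : a - a' ∈ X ⊓ Y := ⟨X.sub_mem ha.2 ha'.2, e ▸ Y.sub_mem hb'.2 hb.2⟩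
    have h1 : a ∈ X ⊓ Y := by
      rw [← kA]
      refine ⟨ha, ?_⟩
      have := (Z' ⊓ X).add_mem (hWA'.le hd) ha'
      rwa [sub_add_cancel] at this
    have h2 : b ∈ X ⊓ Y := by
      rw [← kB]
      refine ⟨hb, ?_⟩
      have := (Z' ⊓ Y).sub_mem hb' (hWB'.le (e ▸ hd))
      rwa [sub_sub_cancel] at this
    exact (X ⊓ Y).add_mem h1 h2
  exact hZZ.2.2 (hle.trans_lt hWA.lt) hZX.1.lt

theorem adjacent_symm {X Y : Submodule ℂ H} (h : Adjacent X Y) : Adjacent Y X := by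
  rw [adjacent_iff] at *
  rw [inf_comm]
  exact ⟨h.2, h.1⟩

theorem backward (X Y Z : Submodule ℂ H)
    (hX : X ∈ Ginf (H := H)) (hY : Y ∈ Ginf (H := H)) (hne : X ≠ Y) (hn : ¬ Adjacent X Y)
    (hZ : Z ∈ Ginf (H := H)) (hZX : OrthoAdjacent Z X) (hZY : OrthoAdjacent Z Y) :
    {Z' : Submodule ℂ H | Z' ∈ Ginf (H := H) ∧ OrthoAdjacent Z' X ∧ OrthoAdjacent Z' Y ∧
          OrthoAdjacent Z' Z}.Finite := by
  refine (Set.toFinite {(Z ⊓ X) ⊔ (Y ⊓ (Z ⊓ Y)ᗮ), (Z ⊓ Y) ⊔ (X ⊓ (Z ⊓ X)ᗮ)}).subset ?_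
  rintro Z' ⟨hZ', h1, h2, h3⟩
  rcases dichotomy hne hn hZX.1 hZY.1 h1.1 h2.1 h3.1 with h | h
  · left
    exact determined hne hn hX.1 hY.1 hZ.1 hZ'.1 hZX hZY h1 h2 h3 h
  · right
    exact determined hne.symm (fun h => hn (adjacent_symm h)) hY.1 hX.1 hZ.1 hZ'.1 hZY hZX h2 h1 h3 h

/-- for distinct `X, Y ∈ G_∞(H)`, they are adjacent iff there are infinitely many
`Z ∈ G_∞(H)` ortho-adjacent to both `X, Y` such that there are infinitely many `Z' ∈ G_∞(H)`
ortho-adjacent to each of `X, Y, Z`. -/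
theorem stmt6 (hH : ¬FiniteDimensional ℂ H) (X Y : Submodule ℂ H)
    (hX : X ∈ Ginf (H := H)) (hY : Y ∈ Ginf (H := H)) (hne : X ≠ Y) :
    Adjacent X Y ↔
      {Z : Submodule ℂ H | Z ∈ Ginf (H := H) ∧ OrthoAdjacent Z X ∧ OrthoAdjacent Z Y ∧
        {Z' : Submodule ℂ H | Z' ∈ Ginf (H := H) ∧ OrthoAdjacent Z' X ∧ OrthoAdjacent Z' Y ∧
          OrthoAdjacent Z' Z}.Infinite}.Infinite := by
  constructor
  · exact forward X Y hX hY
  · intro h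
    by_contra hn
    obtain ⟨Z, hZ, h1, h2, h3⟩ := h.nonempty
    exact h3 (backward X Y Z hX hY hne hn hZ h1 h2)
end

section
/- Let X, Y ∈ G_∞(H) be adjacent and let P, Q be orthogonal one-dimensional subspaces of (X + Y)^⊥. Then P ⊕ (X ∩ Y) and Q ⊕ (X ∩ Y) are elements of G_∞(H) which are ortho-adjacent to each other and each of them is ortho-adjacent to both X and Y. -/
open Module Submodule Classical

variable {H : Type*} [NormedAddCommGroup H] [InnerProductSpace ℂ H] [CompleteSpace H]

theorem aux_proj (K : Submodule ℂ H) [K.HasOrthogonalProjection] (h : IsClosed (K : Set H)) :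
    projCLM K = K.starProjection := by
  unfold projCLM
  rw [dif_pos h]
  rfl

theorem aux_compat (W P L : Submodule ℂ H) [FiniteDimensional ℂ P]
    (hW : IsClosed (W : Set H)) (hL : IsClosed (L : Set H)) (hWL : W ≤ L) (hPL : P ≤ Lᗮ) :
    IsClosed ((P ⊔ W : Submodule ℂ H) : Set H) ∧ Compatible (P ⊔ W) L := by
  have hS : IsClosed ((P ⊔ W : Submodule ℂ H) : Set H) := by
    rw [sup_comm]; exact Submodule.isClosed_sup_finiteDimensional W P hW
  refine ⟨hS, ?_⟩
  haveI : CompleteSpace W := hW.completeSpace_coe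
  haveI : CompleteSpace L := hL.completeSpace_coe
  haveI : CompleteSpace (P ⊔ W : Submodule ℂ H) := hS.completeSpace_coe
  have hPLo : P ⟂ L := hPL
  have hPW : P ⟂ W := hPLo.mono_right hWL
  have key : (P ⊔ W).starProjection = P.starProjection + W.starProjection := by
    ext x
    refine eq_starProjection_of_mem_orthogonal ?_ ?_
    · exact add_mem (mem_sup_left (starProjection_apply_mem _ _))
        (mem_sup_right (starProjection_apply_mem _ _))
    · rw [← inf_orthogonal]
      refine ⟨?_, ?_⟩
      · have h1 := sub_starProjection_mem_orthogonal (K := P) x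
        have h2 : W.starProjection x ∈ Pᗮ := hPW.symm (starProjection_apply_mem _ _)
        have := sub_mem h1 h2
        rwa [sub_sub] at this
      · have h1 := sub_starProjection_mem_orthogonal (K := W) x
        have h2 : P.starProjection x ∈ Wᗮ := hPW (starProjection_apply_mem _ _)
        have := sub_mem h1 h2
        rwa [sub_sub, add_comm] at this
  have a1 : P.starProjection ∘L L.starProjection = 0 := hPLo.starProjection_comp_starProjection
  have a2 : L.starProjection ∘L P.starProjection = 0 :=
    hPLo.symm.starProjection_comp_starProjection
  have a3 : W.starProjection ∘L L.starProjection = W.starProjection :=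
    starProjection_comp_starProjection_of_le hWL
  have a4 : L.starProjection ∘L W.starProjection = W.starProjection := by
    ext x
    exact starProjection_eq_self_iff.2 (hWL (starProjection_apply_mem _ _))
  unfold Compatible
  rw [aux_proj _ hS, aux_proj _ hL, key]
  change (P.starProjection + W.starProjection) ∘L L.starProjection =
    L.starProjection ∘L (P.starProjection + W.starProjection)
  rw [ContinuousLinearMap.add_comp, ContinuousLinearMap.comp_add, a1, a2, a3, a4]

theorem aux_codim (W P : Submodule ℂ H) [FiniteDimensional ℂ P] (hP : finrank ℂ P = 1)
    (hPW : P ≤ Wᗮ) : CodimIn W (P ⊔ W) 1 := by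
  have hd : P ⊓ W = ⊥ := (Submodule.IsOrtho.disjoint (show P ⟂ W from hPW)).eq_bot
  have hc : (P ⊓ W).comap P.subtype = ⊥ := by
    rw [hd]; exact LinearMap.ker_eq_bot.2 P.injective_subtype
  have e := LinearMap.quotientInfEquivSupQuotient P W
  have e2 := (Submodule.quotEquivOfEqBot _ hc).symm.trans e
  exact ⟨le_sup_right, Module.Finite.equiv e2, by rw [← hP]; exact e2.finrank_eq.symm⟩

theorem aux_oadj (W P L : Submodule ℂ H) (hP : finrank ℂ P = 1)
    (hW : IsClosed (W : Set H)) (hL : IsClosed (L : Set H)) (hPL : P ≤ Lᗮ)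
    (hc : CodimIn W L 1) : OrthoAdjacent (P ⊔ W) L := by
  haveI : FiniteDimensional ℂ P := Module.finite_of_finrank_eq_succ hP
  have hWL : W ≤ L := hc.1
  have hi : (P ⊔ W) ⊓ L = W := by
    rw [sup_comm, sup_inf_assoc_of_le _ hWL,
      (Submodule.IsOrtho.disjoint (show P ⟂ L from hPL)).eq_bot, sup_bot_eq]
  refine ⟨⟨?_, ?_⟩, (aux_compat W P L hW hL hWL hPL).2⟩
  · rw [hi]; exact aux_codim W P hP (hPL.trans (orthogonal_le hWL))
  · rw [hi]; exact hc

theorem aux_ginf (W P X : Submodule ℂ H) (hP : finrank ℂ P = 1)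
    (hW : IsClosed (W : Set H)) (hX : X ∈ Ginf (H := H)) (hPX : P ≤ Xᗮ)
    (hc : CodimIn W X 1) : P ⊔ W ∈ Ginf (H := H) := by
  haveI : FiniteDimensional ℂ P := Module.finite_of_finrank_eq_succ hP
  refine ⟨(aux_compat W P X hW hX.1 hc.1 hPX).1, fun h => hX.2.1 ?_, fun h => hX.2.2 ?_⟩
  · haveI : FiniteDimensional ℂ W := Submodule.finiteDimensional_of_le (le_sup_right : W ≤ P ⊔ W)
    haveI := hc.2.1
    haveI : FiniteDimensional ℂ (W.comap X.subtype) :=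
      Module.Finite.equiv (Submodule.comapSubtypeEquivOfLe hc.1).symm
    exact Module.Finite.of_submodule_quotient (W.comap X.subtype)
  · have h1 := sup_orthogonal_inf_of_hasOrthogonalProjection hPX
    have h2 : Pᗮ ⊓ Xᗮ ≤ (P ⊔ W)ᗮ := by
      rw [← inf_orthogonal]
      exact inf_le_inf_left _ (orthogonal_le hc.1)
    haveI : FiniteDimensional ℂ (Pᗮ ⊓ Xᗮ : Submodule ℂ H) := Submodule.finiteDimensional_of_le h2
    rw [← h1]
    infer_instance

/-- for adjacent `X, Y ∈ G_∞(H)` and orthogonal one-dimensional subspaces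
`P, Q ⊆ (X + Y)^⊥`, the subspaces `P ⊕ (X ∩ Y)` and `Q ⊕ (X ∩ Y)` belong to `G_∞(H)`, are
ortho-adjacent to each other, and each is ortho-adjacent to both `X` and `Y`. -/
theorem stmt7 (hH : ¬FiniteDimensional ℂ H) (X Y P Q : Submodule ℂ H)
    (hX : X ∈ Ginf (H := H)) (hY : Y ∈ Ginf (H := H)) (hadj : Adjacent X Y)
    (hP : P ≤ (X ⊔ Y)ᗮ) (hQ : Q ≤ (X ⊔ Y)ᗮ)
    (hPdim : finrank ℂ P = 1) (hQdim : finrank ℂ Q = 1)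
    (hPQ : P ≤ Qᗮ) :
    P ⊔ (X ⊓ Y) ∈ Ginf (H := H) ∧ Q ⊔ (X ⊓ Y) ∈ Ginf (H := H) ∧
    OrthoAdjacent (P ⊔ (X ⊓ Y)) (Q ⊔ (X ⊓ Y)) ∧
    OrthoAdjacent (P ⊔ (X ⊓ Y)) X ∧ OrthoAdjacent (P ⊔ (X ⊓ Y)) Y ∧
    OrthoAdjacent (Q ⊔ (X ⊓ Y)) X ∧ OrthoAdjacent (Q ⊔ (X ⊓ Y)) Y := by
  have hW : IsClosed ((X ⊓ Y : Submodule ℂ H) : Set H) := hX.1.inter hY.1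
  have hPX : P ≤ Xᗮ := hP.trans (orthogonal_le le_sup_left)
  have hPY : P ≤ Yᗮ := hP.trans (orthogonal_le le_sup_right)
  have hQX : Q ≤ Xᗮ := hQ.trans (orthogonal_le le_sup_left)
  have hQY : Q ≤ Yᗮ := hQ.trans (orthogonal_le le_sup_right)
  have gP := aux_ginf (X ⊓ Y) P X hPdim hW hX hPX hadj.1
  have gQ := aux_ginf (X ⊓ Y) Q X hQdim hW hX hQX hadj.1
  haveI : FiniteDimensional ℂ Q := Module.finite_of_finrank_eq_succ hQdim
  refine ⟨gP, gQ, ?_, aux_oadj _ P X hPdim hW hX.1 hPX hadj.1,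
    aux_oadj _ P Y hPdim hW hY.1 hPY hadj.2, aux_oadj _ Q X hQdim hW hX.1 hQX hadj.1,
    aux_oadj _ Q Y hQdim hW hY.1 hQY hadj.2⟩
  refine aux_oadj _ P _ hPdim hW gQ.1 ?_
    (aux_codim _ Q hQdim (hQX.trans (orthogonal_le inf_le_left)))
  rw [← inf_orthogonal]
  exact le_inf hPQ (hPX.trans (orthogonal_le inf_le_left))
end

section
/- Let f be a bijective transformation of G_∞(H) which preserves the ortho-adjacency relation in both directions (i.e., X, Y are ortho-adjacent if and only if f(X), f(Y) are ortho-adjacent). Then f also preserves the adjacency relation in both directions: X, Y ∈ G_∞(H) are adjacent if and only if f(X), f(Y) are adjacent. -/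
open Module Submodule Classical

variable {H : Type*} [NormedAddCommGroup H] [InnerProductSpace ℂ H] [CompleteSpace H]

section latt
variable {α : Type*} [Lattice α] [IsModularLattice α]

theorem aux_inf_eq {a b m : α} (h : a ⊓ b ⋖ b) (hm : m ⋖ b) (hma : m ≤ a) : a ⊓ b = m := by
  rcases hm.eq_or_eq (le_inf hma hm.le) inf_le_right with h1 | h1
  · exact h1
  · exact absurd h1 h.ne

theorem aux_star {W₁ W₂ W₃ X : α} (h12 : W₁ ⊓ W₂ ⋖ W₁) (h21 : W₁ ⊓ W₂ ⋖ W₂)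
    (h3 : W₁ ⊓ W₂ ≤ W₃) (h3' : W₁ ⊓ W₂ ⋖ W₃) (hn : ¬ W₃ ≤ W₁ ⊔ W₂)
    (x1 : X ⊓ W₁ ⋖ X) (y1 : X ⊓ W₁ ⋖ W₁) (y2 : X ⊓ W₂ ⋖ W₂) (y3 : X ⊓ W₃ ⋖ W₃) :
    W₁ ⊓ W₂ ≤ X := by
  by_contra hM
  have key : ∀ W, W₁ ⊓ W₂ ≤ W → X ⊓ W ⋖ W → W ≤ X ⊔ (W₁ ⊓ W₂) := by
    intro W hW hc
    have h1 : X ⊓ W ⊔ (W₁ ⊓ W₂) = W := by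
      rcases hc.eq_or_eq (le_sup_left : X ⊓ W ≤ X ⊓ W ⊔ (W₁ ⊓ W₂))
        (sup_le inf_le_right hW) with h | h
      · exact absurd ((sup_eq_left.1 h).trans inf_le_left) hM
      · exact h
    calc W = X ⊓ W ⊔ (W₁ ⊓ W₂) := h1.symm
      _ ≤ _ := sup_le_sup_right inf_le_left _
  have k1 := key W₁ inf_le_left y1
  have k2 := key W₂ inf_le_right y2
  have k3 := key W₃ h3 y3
  rcases x1.eq_or_eq (c := X ⊓ (W₁ ⊔ W₂)) (inf_le_inf_left _ le_sup_left) inf_le_left with h | h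
  · have : W₁ = W₁ ⊔ W₂ := by
      refine eq_of_le_of_inf_le_of_sup_le (z := X) le_sup_left ?_ ?_
      · rw [inf_comm, h, inf_comm]
      · refine sup_le ((sup_le k1 k2).trans (sup_le le_sup_right (inf_le_left.trans le_sup_left)))
          le_sup_right
    have h4 : W₂ ≤ W₁ := by rw [this]; exact le_sup_right
    exact h21.ne (inf_eq_right.2 h4)
  · have h4 : X ≤ W₁ ⊔ W₂ := inf_eq_left.1 h
    exact hn (k3.trans (sup_le h4 (inf_le_left.trans le_sup_left)))

theorem aux_star_adj {W₁ W₂ W₃ X Y : α} (h12 : W₁ ⊓ W₂ ⋖ W₁) (h21 : W₁ ⊓ W₂ ⋖ W₂)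
    (h3 : W₁ ⊓ W₂ ≤ W₃) (h3' : W₁ ⊓ W₂ ⋖ W₃) (hn : ¬ W₃ ≤ W₁ ⊔ W₂)
    (x1 : X ⊓ W₁ ⋖ X) (y1 : X ⊓ W₁ ⋖ W₁) (y2 : X ⊓ W₂ ⋖ W₂) (y3 : X ⊓ W₃ ⋖ W₃)
    (x1' : Y ⊓ W₁ ⋖ Y) (y1' : Y ⊓ W₁ ⋖ W₁) (y2' : Y ⊓ W₂ ⋖ W₂) (y3' : Y ⊓ W₃ ⋖ W₃)
    (hne : X ≠ Y) : X ⊓ Y ⋖ X ∧ X ⊓ Y ⋖ Y := by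
  have hX := aux_star h12 h21 h3 h3' hn x1 y1 y2 y3
  have hY := aux_star h12 h21 h3 h3' hn x1' y1' y2' y3'
  rw [aux_inf_eq y1 h12 hX] at x1
  rw [aux_inf_eq y1' h12 hY] at x1'
  have : X ⊓ Y = W₁ ⊓ W₂ := by
    rcases x1.eq_or_eq (le_inf hX hY) inf_le_left with h | h
    · exact h
    · rcases x1'.eq_or_eq hX (inf_eq_left.1 h) with h' | h'
      · exact absurd h' x1.ne'
      · exact absurd h' hne
  rw [this]; exact ⟨x1, x1'⟩

theorem aux_tri {W₁ W₂ W₃ : α} (h12 : W₁ ⊓ W₂ ⋖ W₁) 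
    (h13 : W₁ ⊓ W₃ ⋖ W₁) (h31 : W₁ ⊓ W₃ ⋖ W₃) (h32 : W₂ ⊓ W₃ ⋖ W₃)
    (h : ¬ W₁ ⊓ W₂ ≤ W₃) : W₃ ≤ W₁ ⊔ W₂ := by
  by_contra hn
  have h1 : W₁ ⊓ W₃ ⊔ W₂ ⊓ W₃ = W₁ ⊓ W₃ := by
    rcases h31.eq_or_eq (le_sup_left : _ ≤ W₁ ⊓ W₃ ⊔ W₂ ⊓ W₃) 
      (sup_le inf_le_right inf_le_right) with h | h
    · exact h
    · exact absurd (h.symm.le.trans (sup_le_sup inf_le_left inf_le_left)) hn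
  have h2 : W₂ ⊓ W₃ ≤ W₁ ⊓ W₃ := sup_eq_left.1 h1
  have h3 : W₁ ⊓ W₃ = W₂ ⊓ W₃ := by
    rcases h32.eq_or_eq h2 inf_le_right with h | h
    · exact h
    · exact absurd h h31.ne
  have h4 : W₁ ⊓ W₃ ≤ W₁ ⊓ W₂ := le_inf inf_le_left (h3.le.trans inf_le_left)
  rcases h13.eq_or_eq h4 inf_le_left with h5 | h5
  · exact h (h5.le.trans inf_le_right)
  · exact h12.ne h5

def LAdj (a b : α) : Prop := a ⊓ b ⋖ a ∧ a ⊓ b ⋖ b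


theorem LAdj.symm' {a b : α} (h : LAdj a b) : LAdj b a := by
  unfold LAdj at *; rw [inf_comm]; exact h.symm

theorem LAdj.dual {a b : α} (h : LAdj a b) : LAdj (OrderDual.toDual a) (OrderDual.toDual b) := by
  constructor
  · rw [← toDual_sup, toDual_covBy_toDual_iff]
    exact h.2.sup_of_inf_right
  · rw [← toDual_sup, toDual_covBy_toDual_iff]
    exact h.1.sup_of_inf_left

theorem LAdj.of_dual {a b : α} (h : LAdj (OrderDual.toDual a) (OrderDual.toDual b)) :
    LAdj a b := LAdj.dual (α := αᵒᵈ) h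

theorem aux_star_LAdj {W₁ W₂ W₃ X Y : α} (h12 : LAdj W₁ W₂) (h13 : LAdj W₁ W₃)
    (h3 : W₁ ⊓ W₂ ≤ W₃) (hn : ¬ W₃ ≤ W₁ ⊔ W₂)
    (x1 : LAdj X W₁) (x2 : LAdj X W₂) (x3 : LAdj X W₃)
    (y1 : LAdj Y W₁) (y2 : LAdj Y W₂) (y3 : LAdj Y W₃) (hne : X ≠ Y) : LAdj X Y := by
  have h : W₁ ⊓ W₂ ⋖ W₃ := by
    have := aux_inf_eq h13.symm'.2 h12.1 h3
    rw [← this]; exact h13.symm'.1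
  exact aux_star_adj h12.1 h12.2 h3 h hn x1.1 x1.2 x2.2 x3.2 y1.1 y1.2 y2.2 y3.2 hne

theorem aux_LAdj {W₁ W₂ W₃ X Y : α} (h12 : LAdj W₁ W₂) (h13 : LAdj W₁ W₃) (h23 : LAdj W₂ W₃)
    (hn : ¬ (W₁ ⊓ W₂ ≤ W₃ ∧ W₃ ≤ W₁ ⊔ W₂))
    (x1 : LAdj X W₁) (x2 : LAdj X W₂) (x3 : LAdj X W₃)
    (y1 : LAdj Y W₁) (y2 : LAdj Y W₂) (y3 : LAdj Y W₃) (hne : X ≠ Y) : LAdj X Y := by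
  by_cases h : W₁ ⊓ W₂ ≤ W₃
  · exact aux_star_LAdj h12 h13 h (fun h' => hn ⟨h, h'⟩) x1 x2 x3 y1 y2 y3 hne
  · have h' := aux_tri h12.1 h13.1 h13.2 h23.2 h
    exact LAdj.of_dual (aux_star_LAdj h12.dual h13.dual h' h x1.dual x2.dual x3.dual
      y1.dual y2.dual y3.dual hne)
end latt

theorem codim_iff {W X : Submodule ℂ H} (h : W ≤ X) : CodimIn W X 1 ↔ W ⋖ X := by
  rw [covBy_iff_quot_is_simple h, isSimpleModule_iff_finrank_eq_one]
  constructor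
  · exact fun h => h.2.2
  · exact fun h' => ⟨h, Module.finite_of_finrank_eq_succ h', h'⟩

theorem adj_iff {X Y : Submodule ℂ H} : Adjacent X Y ↔ LAdj X Y := by
  unfold Adjacent LAdj
  rw [codim_iff inf_le_left, codim_iff inf_le_right]

theorem OA_symm {X Y : Submodule ℂ H} (h : OrthoAdjacent X Y) : OrthoAdjacent Y X :=
  ⟨adj_iff.2 (adj_iff.1 h.1).symm', Commute.symm h.2⟩

theorem proj_mem {K : Submodule ℂ H} (h : IsClosed (K : Set H)) (x : H) : projCLM K x ∈ K := by
  simp [projCLM, h]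

theorem proj_sub {K : Submodule ℂ H} (h : IsClosed (K : Set H)) (x : H) :
    x - projCLM K x ∈ Kᗮ := by
  haveI : CompleteSpace K := h.completeSpace_coe
  simp only [projCLM, h, dif_pos]
  exact sub_starProjection_mem_orthogonal x

theorem proj_eq {K : Submodule ℂ H} (h : IsClosed (K : Set H)) {x v : H} (hv : v ∈ K)
    (hx : x - v ∈ Kᗮ) : projCLM K x = v := by
  haveI : CompleteSpace K := h.completeSpace_coe
  simp only [projCLM, h, dif_pos]
  exact eq_starProjection_of_mem_orthogonal hv hx

theorem proj_self {K : Submodule ℂ H} (h : IsClosed (K : Set H)) {x : H} (hv : x ∈ K) :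
    projCLM K x = x := proj_eq h hv (by simp)

theorem comp_mem {K L : Submodule ℂ H} (hL : IsClosed (L : Set H)) (hc : Compatible K L)
    {x : H} (hx : x ∈ L) : projCLM K x ∈ L := by
  have h : projCLM K (projCLM L x) = projCLM L (projCLM K x) :=
    congrArg (fun (T : H →L[ℂ] H) => T x) hc
  rw [proj_self hL hx] at h
  rw [h]; exact proj_mem hL _

theorem comp_of_mem {K L : Submodule ℂ H} (hK : IsClosed (K : Set H)) (hL : IsClosed (L : Set H))
    (h : ∀ x ∈ L, projCLM K x ∈ L) : Compatible K L := by
  show projCLM K * projCLM L = projCLM L * projCLM K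
  ext x
  show projCLM K (projCLM L x) = projCLM L (projCLM K x)
  symm
  apply proj_eq hL (h _ (proj_mem hL x))
  rw [← map_sub]
  -- projection of a vector orthogonal to `L`
  rw [Submodule.mem_orthogonal]
  intro u hu
  have h0 := (Submodule.mem_orthogonal _ _).1 (proj_sub hL x) _ (h u hu)
  set y := x - projCLM L x
  have h1 := (Submodule.mem_orthogonal' _ _).1 (proj_sub hK u) _ (proj_mem hK y)
  have h2 := (Submodule.mem_orthogonal _ _).1 (proj_sub hK y) _ (proj_mem hK u)
  rw [inner_sub_left] at h1
  rw [inner_sub_right] at h2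
  rw [sub_eq_zero.1 h1, ← sub_eq_zero.1 h2, h0]

theorem not_both {W₁ W₂ W₃ : Submodule ℂ H} (c1 : IsClosed (W₁ : Set H))
    (c2 : IsClosed (W₂ : Set H)) (c3 : IsClosed (W₃ : Set H))
    (h12 : OrthoAdjacent W₁ W₂) (h13 : OrthoAdjacent W₁ W₃) (h23 : OrthoAdjacent W₂ W₃) :
    ¬ (W₁ ⊓ W₂ ≤ W₃ ∧ W₃ ≤ W₁ ⊔ W₂) := by
  rintro ⟨hM, hN⟩
  have a12 := adj_iff.1 h12.1
  have a13 := adj_iff.1 h13.1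
  have a23 := adj_iff.1 h23.1
  have e1 := aux_inf_eq a13.symm'.2 a12.1 hM
  have e2 := aux_inf_eq a23.symm'.2 a12.2 hM
  have : W₃ ≤ W₁ ⊓ W₂ := by
    intro x hx
    obtain ⟨a, ha, b, hb, hab⟩ := Submodule.mem_sup.1 (hN hx)
    have m1 : projCLM W₁ x ∈ W₁ ⊓ W₂ := by
      rw [← e1]; exact ⟨comp_mem c3 h13.2 hx, proj_mem c1 x⟩
    have m2 : x - projCLM W₁ x ∈ W₁ ⊓ W₂ := by
      rw [← e2]
      refine ⟨sub_mem hx (comp_mem c3 h13.2 hx), ?_⟩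
      have : x - projCLM W₁ x = b - projCLM W₁ b := by
        rw [← hab, map_add, proj_self c1 ha]; abel
      rw [this]
      exact sub_mem hb (comp_mem c2 h12.2 hb)
    have := add_mem m1 m2
    rwa [add_sub_cancel] at this
  have h1 : W₃ ≤ W₁ := this.trans inf_le_left
  exact a13.2.ne (inf_eq_right.2 h1)

theorem exists_perp_s8 {K F : Submodule ℂ H} (hK : ¬ FiniteDimensional ℂ K)
    [FiniteDimensional ℂ F] : ∃ w ∈ K, w ≠ 0 ∧ w ∈ Fᗮ := by
  by_contra! hc
  apply hK
  let T : K →ₗ[ℂ] F := (F.orthogonalProjectionOnto).toLinearMap.comp K.subtype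
  have hT : Function.Injective T := by
    rw [injective_iff_map_eq_zero]
    intro k hk
    by_contra hne
    refine hc k k.2 (by simpa using hne) ?_
    exact (Submodule.orthogonalProjectionOnto_eq_zero_iff).1 hk
  exact FiniteDimensional.of_injective T hT

theorem OA_of {K Z : Submodule ℂ H} {w : H} (hK : IsClosed (K : Set H)) (hZ : IsClosed (Z : Set H))
    (hZK : Z ⋖ K) (hw : w ∈ Kᗮ) (hw0 : w ≠ 0) : OrthoAdjacent K (Z ⊔ span ℂ {w}) := by
  have hwK : w ∉ K := by
    intro h
    exact hw0 (inner_self_eq_zero.1 ((Submodule.mem_orthogonal _ _).1 hw w h))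
  have hinf : K ⊓ (Z ⊔ span ℂ {w}) = Z := by
    apply le_antisymm
    · rintro x ⟨hx, hx'⟩
      obtain ⟨z, hz, b, hb, rfl⟩ := Submodule.mem_sup.1 hx'
      obtain ⟨c, rfl⟩ := Submodule.mem_span_singleton.1 hb
      have : c • w ∈ K := by
        have := K.sub_mem hx (hZK.le hz); simpa using this
      by_cases hc : c = 0
      · simpa [hc] using hz
      · exact absurd ((K.smul_mem_iff hc).1 this) hwK
    · exact le_inf hZK.le le_sup_left
  refine ⟨adj_iff.2 ⟨by rwa [hinf], ?_⟩, comp_of_mem hK ?_ ?_⟩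
  · rw [hinf, sup_comm]
    exact Submodule.covBy_span_singleton_sup (fun h => hwK (hZK.le h))
  · exact Submodule.isClosed_sup_finiteDimensional _ _ hZ
  · intro x hx
    obtain ⟨z, hz, b, hb, rfl⟩ := Submodule.mem_sup.1 hx
    obtain ⟨c, rfl⟩ := Submodule.mem_span_singleton.1 hb
    rw [proj_eq hK (hZK.le hz)]
    · exact Submodule.mem_sup_left hz
    · simpa using Submodule.smul_mem _ c hw

theorem cov_span {Z X : Submodule ℂ H} (h : Z ⋖ X) : ∃ x, X = Z ⊔ span ℂ {x} := by
  obtain ⟨x, hx, hxZ⟩ := SetLike.exists_of_lt h.lt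
  refine ⟨x, ?_⟩
  rcases h.eq_or_eq (c := Z ⊔ span ℂ {x}) le_sup_left
    (sup_le h.le ((span_singleton_le_iff_mem _ _).2 hx)) with h | h
  · exact absurd (h.le (Submodule.mem_sup_right (mem_span_singleton_self x))) hxZ
  · exact h.symm

theorem Ginf_of {X Z : Submodule ℂ H} (hX : X ∈ Ginf (H := H)) (hZ : IsClosed (Z : Set H))
    (hZX : Z ⋖ X) (w : H) : Z ⊔ span ℂ {w} ∈ Ginf (H := H) := by
  refine ⟨Submodule.isClosed_sup_finiteDimensional _ _ hZ, ?_, ?_⟩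
  · intro h
    obtain ⟨x, hx⟩ := cov_span hZX
    apply hX.2.1
    haveI : FiniteDimensional ℂ Z := Submodule.finiteDimensional_of_le (le_sup_left : Z ≤ Z ⊔ span ℂ {w})
    rw [hx]
    infer_instance
  · intro h
    obtain ⟨v, hv, hv0, hvF⟩ := exists_perp_s8 (F := (Z ⊔ span ℂ {w})ᗮ ⊔ span ℂ {w}) hX.2.2
    rw [← Submodule.inf_orthogonal] at hvF
    have : v ∈ (Z ⊔ span ℂ {w})ᗮ := by
      rw [← Submodule.inf_orthogonal]
      exact ⟨Submodule.orthogonal_le hZX.le hv, hvF.2⟩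
    exact hv0 (inner_self_eq_zero.1 ((Submodule.mem_orthogonal _ _).1 hvF.1 v this))

def Tri (X Y : Submodule ℂ H) : Prop :=
  X ≠ Y ∧ ∃ A ∈ Ginf (H := H), ∃ B ∈ Ginf (H := H), ∃ C ∈ Ginf (H := H),
    OrthoAdjacent A B ∧ OrthoAdjacent A C ∧ OrthoAdjacent B C ∧
    OrthoAdjacent X A ∧ OrthoAdjacent X B ∧ OrthoAdjacent X C ∧
    OrthoAdjacent Y A ∧ OrthoAdjacent Y B ∧ OrthoAdjacent Y C

theorem adj_iff_tri {X Y : Submodule ℂ H} (hX : X ∈ Ginf (H := H)) (hY : Y ∈ Ginf (H := H)) :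
    Adjacent X Y ↔ Tri X Y := by
  constructor
  · intro h
    have h' := adj_iff.1 h
    have hZ : IsClosed ((X ⊓ Y : Submodule ℂ H) : Set H) := hX.1.inter hY.1
    refine ⟨?_, ?_⟩
    · rintro rfl
      exact h'.1.ne (by simp)
    obtain ⟨y, hy⟩ := cov_span h'.2
    obtain ⟨h1, h2⟩ := h'
    set Z := X ⊓ Y
    obtain ⟨a, ha, ha0, ha'⟩ := exists_perp_s8 (F := span ℂ {y}) hX.2.2
    obtain ⟨b, hb, hb0, hb'⟩ := exists_perp_s8 (F := span ℂ {y} ⊔ span ℂ {a}) hX.2.2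
    obtain ⟨c, hc, hc0, hc'⟩ := exists_perp_s8 (F := span ℂ {y} ⊔ span ℂ {a} ⊔ span ℂ {b}) hX.2.2
    simp only [← Submodule.inf_orthogonal] at hb' hc'
    have hP : ∀ {v : H}, v ∈ Xᗮ → v ∈ Zᗮ := fun hv => Submodule.orthogonal_le h1.le hv
    have hPa : ∀ {u v : H}, v ∈ Xᗮ → v ∈ (span ℂ {u})ᗮ → v ∈ (Z ⊔ span ℂ {u})ᗮ := by
      intro u v hv hu
      rw [← Submodule.inf_orthogonal]; exact ⟨hP hv, hu⟩
    have hPY : ∀ {v : H}, v ∈ Xᗮ → v ∈ (span ℂ {y})ᗮ → v ∈ Yᗮ := by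
      intro v hv hu
      rw [hy]; exact hPa hv hu
    have hcov : ∀ {v : H}, v ∈ Xᗮ → v ≠ 0 → Z ⋖ Z ⊔ span ℂ {v} := by
      intro v hv hv0
      rw [sup_comm]
      refine Submodule.covBy_span_singleton_sup (fun h => hv0 ?_)
      exact inner_self_eq_zero.1 ((Submodule.mem_orthogonal _ _).1 (hP hv) v h)
    have gA := Ginf_of hX hZ h1 a
    have gB := Ginf_of hX hZ h1 b
    have gC := Ginf_of hX hZ h1 c
    refine ⟨_, gA, _, gB, _, gC, ?_, ?_, ?_, ?_, ?_, ?_, ?_, ?_, ?_⟩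
    · exact OA_of gA.1 hZ (hcov ha ha0) (hPa hb hb'.2) hb0
    · exact OA_of gA.1 hZ (hcov ha ha0) (hPa hc hc'.1.2) hc0
    · exact OA_of gB.1 hZ (hcov hb hb0) (hPa hc hc'.2) hc0
    · exact OA_of hX.1 hZ h1 ha ha0
    · exact OA_of hX.1 hZ h1 hb hb0
    · exact OA_of hX.1 hZ h1 hc hc0
    · exact OA_of hY.1 hZ h2 (hPY ha ha') ha0
    · exact OA_of hY.1 hZ h2 (hPY hb hb'.1) hb0
    · exact OA_of hY.1 hZ h2 (hPY hc hc'.1.1) hc0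
  · rintro ⟨hne, A, hA, B, hB, C, hC, ab, ac, bc, xa, xb, xc, ya, yb, yc⟩
    exact adj_iff.2 (aux_LAdj (adj_iff.1 ab.1) (adj_iff.1 ac.1) (adj_iff.1 bc.1)
      (not_both hA.1 hB.1 hC.1 ab ac bc) (adj_iff.1 xa.1) (adj_iff.1 xb.1) (adj_iff.1 xc.1)
      (adj_iff.1 ya.1) (adj_iff.1 yb.1) (adj_iff.1 yc.1) hne)

/-- a bijective transformation of `G_∞(H)` preserving ortho-adjacency in both
directions also preserves adjacency in both directions. -/
theorem stmt8 (hH : ¬FiniteDimensional ℂ H)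
    (f : Submodule ℂ H → Submodule ℂ H)
    (hbij : Set.BijOn f (Ginf (H := H)) (Ginf (H := H)))
    (hf : ∀ X ∈ Ginf (H := H), ∀ Y ∈ Ginf (H := H),
      OrthoAdjacent X Y ↔ OrthoAdjacent (f X) (f Y)) :
    ∀ X ∈ Ginf (H := H), ∀ Y ∈ Ginf (H := H),
      Adjacent X Y ↔ Adjacent (f X) (f Y) := by
  intro X hX Y hY
  rw [adj_iff_tri hX hY, adj_iff_tri (hbij.mapsTo hX) (hbij.mapsTo hY)]
  constructor
  · rintro ⟨hne, A, hA, B, hB, C, hC, ab, ac, bc, xa, xb, xc, ya, yb, yc⟩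
    exact ⟨fun h => hne (hbij.injOn hX hY h), f A, hbij.mapsTo hA, f B, hbij.mapsTo hB,
      f C, hbij.mapsTo hC, (hf _ hA _ hB).1 ab, (hf _ hA _ hC).1 ac, (hf _ hB _ hC).1 bc,
      (hf _ hX _ hA).1 xa, (hf _ hX _ hB).1 xb, (hf _ hX _ hC).1 xc,
      (hf _ hY _ hA).1 ya, (hf _ hY _ hB).1 yb, (hf _ hY _ hC).1 yc⟩
  · rintro ⟨hne, A', hA', B', hB', C', hC', ab, ac, bc, xa, xb, xc, ya, yb, yc⟩
    obtain ⟨A, hA, rfl⟩ := hbij.surjOn hA'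
    obtain ⟨B, hB, rfl⟩ := hbij.surjOn hB'
    obtain ⟨C, hC, rfl⟩ := hbij.surjOn hC'
    exact ⟨fun h => hne (congrArg f h), A, hA, B, hB,
      C, hC, (hf _ hA _ hB).2 ab, (hf _ hA _ hC).2 ac, (hf _ hB _ hC).2 bc,
      (hf _ hX _ hA).2 xa, (hf _ hX _ hB).2 xb, (hf _ hX _ hC).2 xc,
      (hf _ hY _ hA).2 ya, (hf _ hY _ hB).2 yb, (hf _ hY _ hC).2 yc⟩
end

section
/- Let C be an A-component of G_∞(H). Let C_{+1} be the set of all X ∈ G_∞(H) containing some element of C as a hyperplane, and C_{-1} the set of all X ∈ G_∞(H) which are a hyperplane in some element of C. Then C_{+1} and C_{-1} are A-components of G_∞(H). -/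
open Module Submodule Classical

variable {H : Type*} [NormedAddCommGroup H] [InnerProductSpace ℂ H] [CompleteSpace H]

theorem codimIn_iff (W X : Submodule ℂ H) (n : ℕ) :
    CodimIn W X n ↔ W ≤ X ∧ Module.length ℂ (↥X ⧸ W.comap X.subtype) = n := by
  unfold CodimIn
  refine and_congr_right fun _ => ⟨?_, ?_⟩
  · rintro ⟨h1, h2⟩
    rw [Module.length_eq_finrank, h2]
  · intro h
    have h1 : FiniteDimensional ℂ (↥X ⧸ W.comap X.subtype) := by
      have : IsFiniteLength ℂ (↥X ⧸ W.comap X.subtype) := by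
        rw [← Module.length_ne_top_iff, h]; simp
      have := (isFiniteLength_iff_isNoetherian_isArtinian.1 this).1
      infer_instance
    refine ⟨h1, ?_⟩
    rw [Module.length_eq_finrank] at h
    exact_mod_cast h

theorem length_tower {W V X : Submodule ℂ H} (h1 : W ≤ V) (h2 : V ≤ X) :
    Module.length ℂ (↥X ⧸ W.comap X.subtype) =
      Module.length ℂ (↥V ⧸ W.comap V.subtype) + Module.length ℂ (↥X ⧸ V.comap X.subtype) := by
  refine Module.length_eq_add_of_exact
    (Submodule.mapQ (W.comap V.subtype) (W.comap X.subtype) (Submodule.inclusion h2)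
      (fun x hx => hx))
    (Submodule.mapQ (W.comap X.subtype) (V.comap X.subtype) LinearMap.id
      (fun x hx => h1 hx)) ?_ ?_ ?_
  · rw [← LinearMap.ker_eq_bot, LinearMap.ker_eq_bot']
    intro x
    induction x using Submodule.Quotient.induction_on with
    | H x =>
      intro hx
      replace hx := (Submodule.Quotient.mk_eq_zero _).1 hx
      rw [Submodule.Quotient.mk_eq_zero]
      exact hx
  · intro x
    induction x using Submodule.Quotient.induction_on with
    | H x => exact ⟨Submodule.Quotient.mk x, rfl⟩
  · intro x
    induction x using Submodule.Quotient.induction_on with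
    | H x =>
      rw [Submodule.mapQ_apply, Submodule.Quotient.mk_eq_zero]
      constructor
      · intro hx
        exact ⟨Submodule.Quotient.mk ⟨x.1, hx⟩, rfl⟩
      · rintro ⟨y, hy⟩
        induction y using Submodule.Quotient.induction_on with
        | H y =>
          replace hy := (Submodule.Quotient.eq _).1 hy
          have h3 : (y : H) - x ∈ W := hy
          have h4 := V.sub_mem y.2 (h1 h3)
          simpa using h4

theorem codimIn_trans {W V X : Submodule ℂ H} {a b : ℕ} (h1 : CodimIn W V a)
    (h2 : CodimIn V X b) : CodimIn W X (a + b) := by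
  rw [codimIn_iff] at *
  refine ⟨h1.1.trans h2.1, ?_⟩
  rw [length_tower h1.1 h2.1, h1.2, h2.2]
  simp

theorem codimIn_split {W V X : Submodule ℂ H} {n : ℕ} (h1 : W ≤ V) (h2 : V ≤ X)
    (h : CodimIn W X n) : ∃ a b, CodimIn W V a ∧ CodimIn V X b ∧ a + b = n := by
  simp only [codimIn_iff] at *
  have h3 := h.2
  rw [length_tower h1 h2] at h3
  have h4 : Module.length ℂ (↥V ⧸ W.comap V.subtype) ≠ ⊤ := by
    intro h; simp [h] at h3
  have h5 : Module.length ℂ (↥X ⧸ V.comap X.subtype) ≠ ⊤ := by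
    intro h; simp [h] at h3
  obtain ⟨a, ha⟩ := ENat.ne_top_iff_exists.1 h4
  obtain ⟨b, hb⟩ := ENat.ne_top_iff_exists.1 h5
  refine ⟨a, b, ⟨h1, ha.symm⟩, ⟨h2, hb.symm⟩, ?_⟩
  rw [← ha, ← hb] at h3
  exact_mod_cast h3

theorem codimIn_unique {W X : Submodule ℂ H} {a b : ℕ} (h1 : CodimIn W X a)
    (h2 : CodimIn W X b) : a = b := h1.2.2.symm.trans h2.2.2

theorem codimIn_inf {W X Z : Submodule ℂ H} {n : ℕ} (h : CodimIn W X n) (hZ : Z ≤ X) :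
    ∃ m, CodimIn (W ⊓ Z) Z m := by
  simp only [codimIn_iff] at *
  have : Module.length ℂ (↥Z ⧸ (W ⊓ Z).comap Z.subtype) ≤
      Module.length ℂ (↥X ⧸ W.comap X.subtype) := by
    refine Module.length_le_of_injective
      (Submodule.mapQ ((W ⊓ Z).comap Z.subtype) (W.comap X.subtype) (Submodule.inclusion hZ)
      (fun x hx => hx.1)) ?_
    rw [← LinearMap.ker_eq_bot, LinearMap.ker_eq_bot']
    intro x
    induction x using Submodule.Quotient.induction_on with
    | H x =>
      intro hx
      replace hx := (Submodule.Quotient.mk_eq_zero _).1 hx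
      rw [Submodule.Quotient.mk_eq_zero]
      exact ⟨hx, x.2⟩
  have h4 : Module.length ℂ (↥Z ⧸ (W ⊓ Z).comap Z.subtype) ≠ ⊤ := by
    intro h'
    rw [h', h.2] at this
    simp at this
  obtain ⟨a, ha⟩ := ENat.ne_top_iff_exists.1 h4
  exact ⟨a, inf_le_right, ha.symm⟩

/-- Relative codimension. -/
def RC (k : ℤ) (X Y : Submodule ℂ H) : Prop :=
  ∃ (W : Submodule ℂ H) (a b : ℕ), CodimIn W X a ∧ CodimIn W Y b ∧ (a : ℤ) - b = k

theorem RC.symm {k : ℤ} {X Y : Submodule ℂ H} (h : RC k X Y) : RC (-k) Y X := by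
  obtain ⟨W, a, b, h1, h2, h3⟩ := h
  exact ⟨W, b, a, h2, h1, by omega⟩

theorem RC.trans {k l : ℤ} {X Y Z : Submodule ℂ H} (h : RC k X Y) (h' : RC l Y Z) :
    RC (k + l) X Z := by
  obtain ⟨W, a, b, h1, h2, h3⟩ := h
  obtain ⟨V, c, d, g1, g2, g3⟩ := h'
  obtain ⟨m, hm⟩ := codimIn_inf g1 h2.1
  obtain ⟨m', hm'⟩ := codimIn_inf h2 g1.1
  rw [inf_comm] at hm'
  have := codimIn_unique (codimIn_trans hm h2) (codimIn_trans hm' g1)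
  exact ⟨V ⊓ W, m + a, m' + d, codimIn_trans hm h1, codimIn_trans hm' g2, by omega⟩

theorem codimIn_self (X : Submodule ℂ H) : CodimIn X X 0 := by
  rw [codimIn_iff]
  refine ⟨le_rfl, ?_⟩
  simp [Module.length_eq_zero_iff]

theorem RC.of_codimIn {X Y : Submodule ℂ H} {n : ℕ} (h : CodimIn Y X n) : RC n X Y :=
  ⟨Y, n, 0, h, codimIn_self Y, by simp⟩

theorem sameFinCodim_iff (X Y : Submodule ℂ H) : SameFinCodim X Y ↔ RC 0 X Y := by
  constructor
  · rintro ⟨n, h1, h2⟩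
    exact ⟨_, n, n, h1, h2, by simp⟩
  · rintro ⟨W, a, b, h1, h2, h3⟩
    have h := le_inf h1.1 h2.1
    obtain ⟨c, a', hc, ha', e1⟩ := codimIn_split h inf_le_left h1
    obtain ⟨c', b', hc', hb', e2⟩ := codimIn_split h inf_le_right h2
    have := codimIn_unique hc hc'
    obtain rfl : a' = b' := by omega
    exact ⟨a', ha', hb'⟩

theorem codimIn_perp {X : Submodule ℂ H} {v : H} (hv : v ∈ X) (h0 : v ≠ 0) :
    CodimIn (X ⊓ (ℂ ∙ v)ᗮ) X 1 := by
  rw [codimIn_iff]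
  refine ⟨inf_le_left, ?_⟩
  let f : X →ₗ[ℂ] ℂ := (innerSL ℂ v).toLinearMap.comp X.subtype
  have hf : Function.Surjective f := by
    refine LinearMap.surjective ?_
    intro h
    have : f ⟨v, hv⟩ = 0 := by rw [h]; rfl
    have h' : inner ℂ v v = 0 := this
    exact h0 (inner_self_eq_zero.1 h')
  have hk : (X ⊓ (ℂ ∙ v)ᗮ).comap X.subtype = LinearMap.ker f := by
    ext x
    simp [f, Submodule.mem_orthogonal_singleton_iff_inner_right]
  rw [hk, (f.quotKerEquivOfSurjective hf).length_eq, Module.length_eq_finrank]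
  simp

theorem infinite_of_codimIn {Y X : Submodule ℂ H} {n : ℕ} (h : CodimIn Y X n)
    (hX : ¬FiniteDimensional ℂ X) : ¬FiniteDimensional ℂ Y := by
  intro hY
  have := h.2.1
  have : Module.Finite ℂ (Y.comap X.subtype) :=
    Module.Finite.equiv (Submodule.comapSubtypeEquivOfLe h.1).symm
  exact hX (Module.Finite.of_submodule_quotient (Y.comap X.subtype))

theorem exists_ne_of_inf {X : Submodule ℂ H} (hX : ¬FiniteDimensional ℂ X) :
    ∃ v ∈ X, v ≠ 0 := by
  apply Submodule.exists_mem_ne_zero_of_ne_bot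
  rintro rfl
  exact hX inferInstance

theorem exists_down {X : Submodule ℂ H} (hX : X ∈ Ginf (H := H)) :
    ∃ Y ∈ Ginf (H := H), CodimIn Y X 1 := by
  obtain ⟨h1, h2, h3⟩ := hX
  obtain ⟨v, hv, h0⟩ := exists_ne_of_inf h2
  have hc := codimIn_perp hv h0
  refine ⟨_, ⟨?_, infinite_of_codimIn hc h2, ?_⟩, hc⟩
  · exact h1.inter (Submodule.isClosed_orthogonal _)
  · intro h
    exact h3 (Submodule.finiteDimensional_of_le (Submodule.orthogonal_le hc.1))

theorem exists_up {X : Submodule ℂ H} (hX : X ∈ Ginf (H := H)) :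
    ∃ Y ∈ Ginf (H := H), CodimIn X Y 1 := by
  obtain ⟨h1, h2, h3⟩ := hX
  obtain ⟨v, hv, h0⟩ := exists_ne_of_inf h3
  have hle : X ≤ (ℂ ∙ v)ᗮ := by
    rw [Submodule.le_orthogonal_iff_le_orthogonal, Submodule.span_singleton_le_iff_mem]
    exact hv
  have e : (X ⊔ ℂ ∙ v) ⊓ (ℂ ∙ v)ᗮ = X := by
    rw [sup_inf_assoc_of_le _ hle, Submodule.inf_orthogonal_eq_bot, sup_bot_eq]
  have hc : CodimIn X (X ⊔ ℂ ∙ v) 1 := by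
    have := codimIn_perp (X := X ⊔ ℂ ∙ v) (v := v)
      (le_sup_right (a := X) (Submodule.mem_span_singleton_self v)) h0
    rwa [e] at this
  refine ⟨_, ⟨?_, ?_, ?_⟩, hc⟩
  · exact Submodule.isClosed_sup_finiteDimensional _ _ h1
  · intro h
    exact h2 (Submodule.finiteDimensional_of_le hc.1)
  · rw [← Submodule.inf_orthogonal]
    exact infinite_of_codimIn (codimIn_perp hv h0) h3

theorem isAComponent_slice {X0 X1 : Submodule ℂ H} {k : ℤ} (h1 : X1 ∈ Ginf (H := H))
    (h : RC k X1 X0) : IsAComponent {X | X ∈ Ginf (H := H) ∧ RC k X X0} := by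
  refine ⟨fun X hX => hX.1, ?_, ?_⟩
  · intro X hX Y hY
    rw [sameFinCodim_iff]
    simpa using hX.2.trans hY.2.symm
  · intro D hD hp hs
    refine Set.Subset.antisymm (fun Z hZ => ⟨hD hZ, ?_⟩) hs
    have := (sameFinCodim_iff _ _).1 (hp Z hZ X1 (hs ⟨h1, h⟩))
    simpa using this.trans h

theorem mem_comp {C : Set (Submodule ℂ H)} (hC : IsAComponent C) {X0 Y : Submodule ℂ H}
    (h0 : X0 ∈ C) (hY : Y ∈ Ginf (H := H)) (h : RC 0 Y X0) : Y ∈ C := by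
  have h2 := hC.2.2 {X | X ∈ Ginf (H := H) ∧ RC 0 X X0} (fun X hX => hX.1)
    (isAComponent_slice hY h).2.1
    (fun X hX => ⟨hC.1 hX, (sameFinCodim_iff _ _).1 (hC.2.1 X hX X0 h0)⟩)
  rw [← h2]
  exact ⟨hY, h⟩

/-- for an `A`-component `C` of `G_∞(H)`, the sets `C₊₁` (elements of `G_∞(H)`
containing some element of `C` as a hyperplane) and `C₋₁` (elements of `G_∞(H)` which are
hyperplanes in some element of `C`) are `A`-components of `G_∞(H)`. -/
theorem stmt9 (hH : ¬FiniteDimensional ℂ H)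
    (C : Set (Submodule ℂ H)) (hC : IsAComponent C) :
    IsAComponent {X | X ∈ Ginf (H := H) ∧ ∃ Y ∈ C, CodimIn Y X 1} ∧
    IsAComponent {X | X ∈ Ginf (H := H) ∧ ∃ Y ∈ C, CodimIn X Y 1} := by
  rcases C.eq_empty_or_nonempty with rfl | ⟨X0, h0⟩
  · have : ∀ X, X ∉ Ginf (H := H) := by
      intro X hX
      have := hC.2.2 {X} (by simpa using hX)
        (by
          rintro _ rfl _ rfl
          rw [sameFinCodim_iff]
          exact RC.of_codimIn (codimIn_self _)) (Set.empty_subset _)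
      simp at this
    have e : ({X | X ∈ Ginf (H := H) ∧ ∃ Y ∈ (∅ : Set (Submodule ℂ H)), CodimIn Y X 1}) = ∅ := by
      ext; simp
    have e' : ({X | X ∈ Ginf (H := H) ∧ ∃ Y ∈ (∅ : Set (Submodule ℂ H)), CodimIn X Y 1}) = ∅ := by
      ext; simp
    rw [e, e']
    exact ⟨hC, hC⟩
  · have hrc : ∀ Y ∈ C, RC 0 Y X0 := fun Y hY => (sameFinCodim_iff _ _).1 (hC.2.1 Y hY X0 h0)
    constructor
    · have e : {X | X ∈ Ginf (H := H) ∧ ∃ Y ∈ C, CodimIn Y X 1} =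
          {X | X ∈ Ginf (H := H) ∧ RC 1 X X0} := by
        ext X
        refine and_congr_right fun hX => ⟨?_, ?_⟩
        · rintro ⟨Y, hY, h⟩
          simpa using (RC.of_codimIn h).trans (hrc Y hY)
        · intro h
          obtain ⟨Y, hY, hc⟩ := exists_down hX
          exact ⟨Y, mem_comp hC h0 hY (by simpa using (RC.of_codimIn hc).symm.trans h), hc⟩
      rw [e]
      obtain ⟨Y, hY, hc⟩ := exists_up (hC.1 h0)
      exact isAComponent_slice hY (by simpa using RC.of_codimIn hc)
    · have e : {X | X ∈ Ginf (H := H) ∧ ∃ Y ∈ C, CodimIn X Y 1} =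
          {X | X ∈ Ginf (H := H) ∧ RC (-1) X X0} := by
        ext X
        refine and_congr_right fun hX => ⟨?_, ?_⟩
        · rintro ⟨Y, hY, h⟩
          simpa using (RC.of_codimIn h).symm.trans (hrc Y hY)
        · intro h
          obtain ⟨Y, hY, hc⟩ := exists_up hX
          exact ⟨Y, mem_comp hC h0 hY (by simpa using (RC.of_codimIn hc).trans h), hc⟩
      rw [e]
      obtain ⟨Y, hY, hc⟩ := exists_down (hC.1 h0)
      exact isAComponent_slice hY (by simpa using (RC.of_codimIn hc).symm)
end

section
/- Let f be a bijective transformation of G_∞(H) which preserves the ortho-adjacency relation in both directions. Let X, X' ∈ G_∞(H) be such that f maps the top G^1(X) onto the top G^1(X'), and let U : X → X' be a surjective linear or conjugate-linear isometry with f(M) = U(M) for every M ∈ G^1(X). Suppose Z ∈ G_∞(H) is a closed subspace of X of codimension 2 in X and f maps the star S(Z) onto a star S(Z') for some Z' ∈ G_∞(H). Then Z' = U(Z), i.e., f(S(Z)) = S(U(Z)). -/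
open Module Submodule Classical

variable {H : Type*} [NormedAddCommGroup H] [InnerProductSpace ℂ H] [CompleteSpace H]

theorem aux_covBy_of_codim {W X : Submodule ℂ H} (h : CodimIn W X 1) {V : Submodule ℂ H}
    (h1 : W ≤ V) (h2 : V < X) : V = W := by
  obtain ⟨hWX, hfd, hr⟩ := h
  have hs : IsSimpleModule ℂ (↥X ⧸ W.comap X.subtype) := isSimpleModule_iff_finrank_eq_one.2 hr
  have hc := isSimpleModule_iff_isCoatom.1 hs
  rcases hc.le_iff.1 (Submodule.comap_mono (f := X.subtype) h1) with h | h
  · exact absurd (Submodule.comap_subtype_eq_top.1 h) (not_le_of_gt h2)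
  · apply le_antisymm _ h1
    intro v hv
    have : (⟨v, h2.le hv⟩ : X) ∈ V.comap X.subtype := hv
    rw [h] at this
    exact this

theorem aux_codim_of_covBy {W X : Submodule ℂ H} (h : W ⋖ X) : CodimIn W X 1 := by
  have hc : IsCoatom (W.comap X.subtype) := by
    refine ⟨fun e => not_le_of_gt h.lt (Submodule.comap_subtype_eq_top.1 e), fun V hV => ?_⟩
    have hWV : W ≤ V.map X.subtype := by
      intro w hw
      exact ⟨⟨w, h.le hw⟩, hV.le hw, rfl⟩
    rcases h.eq_or_eq hWV (Submodule.map_subtype_le X V) with e | e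
    · exfalso
      apply not_le_of_gt hV
      intro v hv
      change (v : H) ∈ W
      rw [← e]
      exact ⟨v, hv, rfl⟩
    · rw [eq_top_iff]
      rintro ⟨x, hx⟩ -
      rw [← e] at hx
      obtain ⟨y, hy, e2⟩ := hx
      have : y = ⟨x, by assumption⟩ := Subtype.ext e2
      rwa [← this]
  have hs := isSimpleModule_iff_isCoatom.2 hc
  have hr := isSimpleModule_iff_finrank_eq_one.1 hs
  exact ⟨h.le, Module.finite_of_finrank_pos (by omega), hr⟩

theorem aux_closed {Z : Submodule ℂ H} (hZ : IsClosed (Z : Set H)) (e : H) :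
    IsClosed ((span ℂ {e} ⊔ Z : Submodule ℂ H) : Set H) := by
  rw [sup_comm]
  exact Submodule.isClosed_sup_finiteDimensional _ _ hZ

theorem aux_exists {Z X : Submodule ℂ H} (hZ : IsClosed (Z : Set H)) (h : CodimIn Z X 2) :
    ∃ M₁ M₂ : Submodule ℂ H, M₁ ∈ topSet X ∧ M₂ ∈ topSet X ∧ M₁ ∈ starSet Z ∧ M₂ ∈ starSet Z ∧
      M₁ ⊓ M₂ = Z ∧ Z < M₁ ∧ M₁ ≤ X := by
  obtain ⟨hZX, hfd, hr⟩ := h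
  let b := Module.finBasisOfFinrankEq ℂ _ hr
  obtain ⟨x, hx⟩ := Submodule.mkQ_surjective _ (b 0)
  obtain ⟨y, hy⟩ := Submodule.mkQ_surjective _ (b 1)
  have hk : ∀ v : X, (v : H) ∈ Z ↔ (Submodule.mkQ (Z.comap X.subtype)) v = 0 := by
    intro v; simp
  have hli := b.linearIndependent
  have hp : ∀ s t : ℂ, s • b 0 + t • b 1 = 0 → s = 0 ∧ t = 0 := by
    intro s t hst
    have := Fintype.linearIndependent_iff.1 hli ![s, t] (by simpa using hst)
    exact ⟨this 0, this 1⟩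
  have hZc : ∀ s t : ℂ, s • (x : H) + t • (y : H) ∈ Z → s = 0 ∧ t = 0 := by
    intro s t hst
    apply hp
    rw [← hx, ← hy, ← map_smul, ← map_smul, ← map_add]
    exact (hk (s • x + t • y)).1 hst
  have hx2 : (x : H) ∉ span ℂ {(y : H)} ⊔ Z := by
    intro h
    obtain ⟨w, hw, z, hz, e⟩ := Submodule.mem_sup.1 h
    obtain ⟨a, rfl⟩ := Submodule.mem_span_singleton.1 hw
    have := hZc 1 (-a) (by
      have : (1 : ℂ) • (x : H) + (-a) • (y : H) = z := by rw [← e]; module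
      rwa [this])
    simp at this
  have hy2 : (y : H) ∉ span ℂ {(x : H)} ⊔ Z := by
    intro h
    obtain ⟨w, hw, z, hz, e⟩ := Submodule.mem_sup.1 h
    obtain ⟨a, rfl⟩ := Submodule.mem_span_singleton.1 hw
    have := hZc (-a) 1 (by
      have : (-a) • (x : H) + (1 : ℂ) • (y : H) = z := by rw [← e]; module
      rwa [this])
    simp at this
  have hx1 : (x : H) ∉ Z := fun h => hx2 (Submodule.mem_sup_right h)
  have hy1 : (y : H) ∉ Z := fun h => hy2 (Submodule.mem_sup_right h)
  have htop : X = span ℂ {(x : H)} ⊔ (span ℂ {(y : H)} ⊔ Z) := by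
    apply le_antisymm
    · intro v hv
      have hs := b.sum_repr (Submodule.mkQ (Z.comap X.subtype) ⟨v, hv⟩)
      rw [Fin.sum_univ_two] at hs
      set s := b.repr (Submodule.mkQ (Z.comap X.subtype) ⟨v, hv⟩) 0
      set t := b.repr (Submodule.mkQ (Z.comap X.subtype) ⟨v, hv⟩) 1
      have hz : v - s • (x : H) - t • (y : H) ∈ Z := by
        refine (hk (⟨v, hv⟩ - s • x - t • y)).2 ?_
        rw [map_sub, map_sub, map_smul, map_smul, hx, hy, ← hs]
        abel
      have e : v = s • (x : H) + (t • (y : H) + (v - s • (x : H) - t • (y : H))) := by abel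
      rw [e]
      exact Submodule.add_mem_sup (Submodule.smul_mem _ _ (Submodule.mem_span_singleton_self _))
        (Submodule.add_mem_sup (Submodule.smul_mem _ _ (Submodule.mem_span_singleton_self _)) hz)
    · refine sup_le ?_ (sup_le ?_ hZX)
      · simp
      · simp
  have htop2 : X = span ℂ {(y : H)} ⊔ (span ℂ {(x : H)} ⊔ Z) := by
    rw [sup_left_comm]; exact htop
  have c1 : span ℂ {(x : H)} ⊔ Z ⋖ X := by
    conv_rhs => rw [htop2]
    exact covBy_span_singleton_sup hy2
  have c2 : span ℂ {(y : H)} ⊔ Z ⋖ X := by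
    conv_rhs => rw [htop]
    exact covBy_span_singleton_sup hx2
  have d1 : Z ⋖ span ℂ {(x : H)} ⊔ Z := covBy_span_singleton_sup hx1
  have d2 : Z ⋖ span ℂ {(y : H)} ⊔ Z := covBy_span_singleton_sup hy1
  refine ⟨span ℂ {(x : H)} ⊔ Z, span ℂ {(y : H)} ⊔ Z, ⟨aux_closed hZ _, aux_codim_of_covBy c1⟩,
    ⟨aux_closed hZ _, aux_codim_of_covBy c2⟩, ⟨aux_closed hZ _, aux_codim_of_covBy d1⟩,
    ⟨aux_closed hZ _, aux_codim_of_covBy d2⟩, ?_, d1.lt, c1.le⟩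
  rcases d1.eq_or_eq (le_inf le_sup_right le_sup_right) inf_le_left with h | h
  · exact h
  · exact absurd (inf_eq_left.1 h (Submodule.mem_sup_left (Submodule.mem_span_singleton_self _))) hx2

/-- with `f`, `X`, `X'`, `U` as in Statement 11, if `Z ∈ G_∞(H)` is a closed
subspace of `X` of codimension 2 in `X` and `f` maps the star `S(Z)` onto a star `S(Z')`,
then `Z' = U(Z)`. -/
theorem stmt12 (hH : ¬FiniteDimensional ℂ H)
    (f : Submodule ℂ H → Submodule ℂ H)
    (hbij : Set.BijOn f (Ginf (H := H)) (Ginf (H := H)))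
    (hf : ∀ X ∈ Ginf (H := H), ∀ Y ∈ Ginf (H := H),
      OrthoAdjacent X Y ↔ OrthoAdjacent (f X) (f Y))
    (X X' : Submodule ℂ H) (hX : X ∈ Ginf (H := H)) (hX' : X' ∈ Ginf (H := H))
    (htop : f '' topSet X = topSet X')
    (Z : Submodule ℂ H) (hZ : Z ∈ Ginf (H := H)) (hZcodim : CodimIn Z X 2)
    (Z' : Submodule ℂ H) (hZ' : Z' ∈ Ginf (H := H))
    (hstar : f '' starSet Z = starSet Z') :
    (∀ U : ↥X ≃ₗᵢ[ℂ] ↥X',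
      (∀ M ∈ topSet X, f M = imL X X' U M) → Z' = imL X X' U Z) ∧
    (∀ U : ↥X ≃ₗᵢ⋆[ℂ] ↥X',
      (∀ M ∈ topSet X, f M = imC X X' U M) → Z' = imC X X' U Z) := by
  obtain ⟨M₁, M₂, ht1, ht2, hs1, hs2, hinf, hlt, hle⟩ := aux_exists hZ.1 hZcodim
  have h1 : f M₁ ∈ starSet Z' := hstar ▸ Set.mem_image_of_mem f hs1
  have h2 : f M₂ ∈ starSet Z' := hstar ▸ Set.mem_image_of_mem f hs2
  constructor
  · intro U hU
    have hinj : Function.Injective U.toLinearEquiv.toLinearMap := U.injective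
    rw [hU _ ht1] at h1
    rw [hU _ ht2] at h2
    refine (aux_covBy_of_codim h1.2 ?_ ?_).symm
    · have : imL X X' U Z = imL X X' U M₁ ⊓ imL X X' U M₂ := by
        unfold imL
        rw [← hinf, Submodule.comap_inf, Submodule.map_inf _ hinj,
          Submodule.map_inf _ X'.injective_subtype]
      rw [this]
      exact le_inf h1.2.1 h2.2.1
    · refine lt_of_le_not_ge ?_ ?_
      · exact Submodule.map_mono (Submodule.map_mono (Submodule.comap_mono hlt.le))
      · intro h
        unfold imL at h
        rw [Submodule.map_le_map_iff_of_injective X'.injective_subtype,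
          Submodule.map_le_map_iff_of_injective hinj] at h
        exact not_le_of_gt hlt fun m hm => h (show (⟨m, hle hm⟩ : X) ∈ _ from hm)
  · intro U hU
    have hinj : Function.Injective U.toLinearEquiv.toLinearMap := U.injective
    rw [hU _ ht1] at h1
    rw [hU _ ht2] at h2
    refine (aux_covBy_of_codim h1.2 ?_ ?_).symm
    · have : imC X X' U Z = imC X X' U M₁ ⊓ imC X X' U M₂ := by
        unfold imC
        rw [← hinf, Submodule.comap_inf, Submodule.map_inf _ hinj,
          Submodule.map_inf _ X'.injective_subtype]
      rw [this]
      exact le_inf h1.2.1 h2.2.1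
    · refine lt_of_le_not_ge ?_ ?_
      · exact Submodule.map_mono (Submodule.map_mono (Submodule.comap_mono hlt.le))
      · intro h
        unfold imC at h
        rw [Submodule.map_le_map_iff_of_injective X'.injective_subtype,
          Submodule.map_le_map_iff_of_injective hinj] at h
        exact not_le_of_gt hlt fun m hm => h (show (⟨m, hle hm⟩ : X) ∈ _ from hm)
end

section
/- Let f be a bijective transformation of G_∞(H) which preserves the ortho-adjacency relation in both directions. Let X, Y ∈ G_∞(H) be adjacent, let f map the tops G^1(X) and G^1(Y) onto tops G^1(X') and G^1(Y') respectively, let U_X : X → X' and U_Y : Y → Y' be surjective linear or conjugate-linear isometries with f(M) = U_X(M) for all M ∈ G^1(X) and f(N) = U_Y(N) for all N ∈ G^1(Y), and suppose that for every one-dimensional subspace P of X ∩ Y the star S(P^⊥ ∩ X ∩ Y) is mapped by f onto a star. Then U_X(P) = U_Y(P) for every one-dimensional subspace P of X ∩ Y. -/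
open Module Submodule Classical

variable {H : Type*} [NormedAddCommGroup H] [InnerProductSpace ℂ H] [CompleteSpace H]

theorem codim_one_iff13 (W X : Submodule ℂ H) : CodimIn W X 1 ↔
    W ≤ X ∧ ∃ v ∈ X, v ∉ W ∧ ∀ x ∈ X, ∃ c : ℂ, x - c • v ∈ W := by
  unfold CodimIn
  constructor
  · rintro ⟨h1, _, h3⟩
    refine ⟨h1, ?_⟩
    obtain ⟨q, hq, hall⟩ := finrank_eq_one_iff'.1 h3
    obtain ⟨v, rfl⟩ := Submodule.Quotient.mk_surjective _ q
    refine ⟨v, v.2, ?_, ?_⟩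
    · intro hv
      apply hq
      rw [Submodule.Quotient.mk_eq_zero]
      exact hv
    · intro x hx
      obtain ⟨c, hc⟩ := hall (Submodule.Quotient.mk ⟨x, hx⟩)
      refine ⟨c, ?_⟩
      rw [← Submodule.Quotient.mk_smul, eq_comm, Submodule.Quotient.eq] at hc
      exact hc
  · rintro ⟨h1, v, hv, hvW, hall⟩
    have h3 : finrank ℂ (↥X ⧸ W.comap X.subtype) = 1 := by
      rw [finrank_eq_one_iff']
      refine ⟨Submodule.Quotient.mk ⟨v, hv⟩, ?_, ?_⟩
      · rw [Ne, Submodule.Quotient.mk_eq_zero]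
        exact hvW
      · intro w
        obtain ⟨x, rfl⟩ := Submodule.Quotient.mk_surjective _ w
        obtain ⟨c, hc⟩ := hall x x.2
        refine ⟨c, ?_⟩
        rw [← Submodule.Quotient.mk_smul, eq_comm, Submodule.Quotient.eq]
        exact hc
    exact ⟨h1, Module.finite_of_finrank_eq_succ h3, h3⟩

theorem perp_decomp13 (p : H) (hp : p ≠ 0) (x : H) : ∃ c : ℂ, x - c • p ∈ (ℂ ∙ p)ᗮ := by
  refine ⟨inner ℂ p x / inner ℂ p p, ?_⟩
  rw [Submodule.mem_orthogonal_singleton_iff_inner_right, inner_sub_right, inner_smul_right,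
    div_mul_cancel₀ _ (inner_self_ne_zero.2 hp), sub_self]

theorem codim_perp13 (p : H) (hp : p ≠ 0) (K : Submodule ℂ H) (hK : p ∈ K) :
    CodimIn ((ℂ ∙ p)ᗮ ⊓ K) K 1 := by
  rw [codim_one_iff13]
  refine ⟨inf_le_right, p, hK, ?_, ?_⟩
  · rintro ⟨h, -⟩
    exact hp (inner_self_eq_zero.1 (Submodule.mem_orthogonal_singleton_iff_inner_right.1 h))
  · intro x hx
    obtain ⟨c, hc⟩ := perp_decomp13 p hp x
    exact ⟨c, hc, K.sub_mem hx (K.smul_mem _ hK)⟩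

theorem core13 (f im : Submodule ℂ H → Submodule ℂ H) (X Z W : Submodule ℂ H)
    (hXc : IsClosed (X : Set H)) (hZc : IsClosed (Z : Set H)) (hZX : CodimIn Z X 1)
    (him : ∀ M ∈ topSet X, f M = im M)
    (ha : ∀ M N, im (M ⊓ N) = im M ⊓ im N)
    (hb : ∀ M N, N ≤ X → im (M ⊓ Nᗮ) = im M ⊓ (im N)ᗮ)
    (hc : ∀ M N, M ≤ X → N ≤ X → im M = im N → M = N)
    (p : H) (hp : p ≠ 0) (hpZ : p ∈ Z)
    (hstar : f '' starSet ((ℂ ∙ p)ᗮ ⊓ Z) = starSet W) :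
    im (ℂ ∙ p) = f Z ⊓ Wᗮ := by
  have hZleX := hZX.1
  have hpc : IsClosed (((ℂ ∙ p)ᗮ : Submodule ℂ H) : Set H) := Submodule.isClosed_orthogonal _
  have hW0Z := codim_perp13 p hp Z hpZ
  have hMX := codim_perp13 p hp X (hZleX hpZ)
  have hMc : IsClosed (((ℂ ∙ p)ᗮ ⊓ X : Submodule ℂ H) : Set H) := hpc.inter hXc
  have hZtop : Z ∈ topSet X := ⟨hZc, hZX⟩
  have hMtop : (ℂ ∙ p)ᗮ ⊓ X ∈ topSet X := ⟨hMc, hMX⟩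
  have hMstar : (ℂ ∙ p)ᗮ ⊓ X ∈ starSet ((ℂ ∙ p)ᗮ ⊓ Z) := by
    refine ⟨hMc, ?_⟩
    rw [codim_one_iff13]
    obtain ⟨_, v, hvX, hvZ, hall⟩ := (codim_one_iff13 _ _).1 hZX
    obtain ⟨d, hd⟩ := perp_decomp13 p hp v
    refine ⟨inf_le_inf_left _ hZleX, v - d • p,
      ⟨hd, X.sub_mem hvX (X.smul_mem _ (hZleX hpZ))⟩, ?_, ?_⟩
    · rintro ⟨-, h⟩
      apply hvZ
      have := Z.add_mem h (Z.smul_mem d hpZ)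
      simpa using this
    · rintro m ⟨hm1, hm2⟩
      obtain ⟨c, hc⟩ := hall m hm2
      refine ⟨c, Submodule.sub_mem _ hm1 (Submodule.smul_mem _ _ hd), ?_⟩
      have := Z.add_mem hc (Z.smul_mem (c * d) hpZ)
      have e : m - c • (v - d • p) = m - c • v + (c * d) • p := by
        rw [smul_sub, smul_smul]; abel
      rw [e]; exact this
  have h1 : CodimIn W (f Z) 1 := by
    have : f Z ∈ starSet W := hstar ▸ Set.mem_image_of_mem f ⟨hZc, hW0Z⟩
    exact this.2
  have h2 : W ≤ f ((ℂ ∙ p)ᗮ ⊓ X) := by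
    have : f ((ℂ ∙ p)ᗮ ⊓ X) ∈ starSet W := hstar ▸ Set.mem_image_of_mem f hMstar
    exact this.2.1
  have hfZ := him _ hZtop
  rw [him _ hMtop] at h2
  have h3 : W ≤ im ((ℂ ∙ p)ᗮ ⊓ Z) := by
    have e : (ℂ ∙ p)ᗮ ⊓ Z = ((ℂ ∙ p)ᗮ ⊓ X) ⊓ Z := by
      rw [inf_assoc, inf_eq_right.2 hZleX]
    rw [e, ha]
    exact le_inf h2 (hfZ ▸ h1.1)
  have h4 : im ((ℂ ∙ p)ᗮ ⊓ Z) ≤ im Z := by rw [ha]; exact inf_le_right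
  have hW : W = im ((ℂ ∙ p)ᗮ ⊓ Z) := by
    refine le_antisymm h3 ?_
    by_contra hne
    obtain ⟨y, hy, hyW⟩ := SetLike.not_le_iff_exists.1 hne
    obtain ⟨_, v, hv, hvW, hall⟩ := (codim_one_iff13 _ _).1 h1
    have hvim : v ∈ im ((ℂ ∙ p)ᗮ ⊓ Z) := by
      obtain ⟨c, hc⟩ := hall y (hfZ ▸ h4 hy)
      have hc0 : c ≠ 0 := by
        rintro rfl
        apply hyW
        simpa using hc
      have := Submodule.smul_mem _ c⁻¹ (Submodule.sub_mem _ hy (h3 hc))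
      rwa [sub_sub_cancel, smul_smul, inv_mul_cancel₀ hc0, one_smul] at this
    have h5 : im Z ≤ im ((ℂ ∙ p)ᗮ ⊓ Z) := by
      intro x hx
      obtain ⟨c, hc⟩ := hall x (hfZ ▸ hx)
      have := Submodule.add_mem _ (h3 hc) (Submodule.smul_mem _ c hvim)
      simpa using this
    have h6 := hc _ _ (inf_le_right.trans hZleX) hZleX (le_antisymm h4 h5)
    have h7 : p ∈ (ℂ ∙ p)ᗮ ⊓ Z := by rw [h6]; exact hpZ
    exact hp (inner_self_eq_zero.1 (Submodule.mem_orthogonal_singleton_iff_inner_right.1 h7.1))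
  have hP : (ℂ ∙ p) = Z ⊓ ((ℂ ∙ p)ᗮ ⊓ Z)ᗮ := by
    apply le_antisymm
    · rw [Submodule.span_singleton_le_iff_mem]
      refine ⟨hpZ, (Submodule.mem_orthogonal _ _).2 ?_⟩
      rintro u ⟨hu, -⟩
      exact Submodule.mem_orthogonal_singleton_iff_inner_left.1 hu
    · rintro z ⟨hz, hz2⟩
      obtain ⟨c, hc⟩ := perp_decomp13 p hp z
      have hw : z - c • p ∈ (ℂ ∙ p)ᗮ ⊓ Z := ⟨hc, Z.sub_mem hz (Z.smul_mem _ hpZ)⟩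
      have e1 := (Submodule.mem_orthogonal _ _).1 hz2 _ hw
      have e2 : inner ℂ (z - c • p) p = 0 := Submodule.mem_orthogonal_singleton_iff_inner_left.1 hc
      have e3 : inner ℂ (z - c • p) (z - c • p) = 0 := by
        rw [inner_sub_right, inner_smul_right, e1, e2]; simp
      have e4 := sub_eq_zero.1 (inner_self_eq_zero.1 e3)
      rw [e4]
      exact Submodule.smul_mem _ _ (Submodule.mem_span_singleton_self p)
  rw [hP, hb _ _ (inf_le_right.trans hZleX), ← hW, hfZ]

theorem re_inner13 {E F : Type*} [NormedAddCommGroup E] [InnerProductSpace ℂ E]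
    [NormedAddCommGroup F] [InnerProductSpace ℂ F] (g : E → F) (hn : ∀ x, ‖g x‖ = ‖x‖)
    (hadd : ∀ x y, g (x + y) = g x + g y) (x y : E) :
    (inner ℂ (g x) (g y)).re = (inner ℂ x y).re := by
  have h1 := norm_add_sq (𝕜 := ℂ) x y
  have h2 := norm_add_sq (𝕜 := ℂ) (g x) (g y)
  rw [← hadd, hn, hn, hn] at h2
  simp only [RCLike.re_to_complex] at h1 h2
  linarith

theorem inner_zero13 {E F : Type*} [NormedAddCommGroup E] [InnerProductSpace ℂ E]
    [NormedAddCommGroup F] [InnerProductSpace ℂ F] (g : E → F) (hn : ∀ x, ‖g x‖ = ‖x‖)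
    (hadd : ∀ x y, g (x + y) = g x + g y)
    (hI : (∀ x, g (Complex.I • x) = Complex.I • g x) ∨
      (∀ x, g (Complex.I • x) = -(Complex.I • g x))) (x y : E) :
    inner ℂ (g x) (g y) = 0 ↔ inner ℂ x y = 0 := by
  have h1 := re_inner13 g hn hadd x y
  have h2 := re_inner13 g hn hadd x (Complex.I • y)
  rw [Complex.ext_iff, Complex.ext_iff, h1]
  rcases hI with hI | hI <;> rw [hI] at h2 <;>
    simp [inner_smul_right] at h2 ⊢ <;> intro _ <;> constructor <;> intro h <;> linarith

theorem props13 (X X' : Submodule ℂ H) (g : X → X') (hg : Function.Bijective g)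
    (hi : ∀ x y, inner ℂ (g x) (g y) = 0 ↔ inner ℂ x y = 0)
    (im : Submodule ℂ H → Submodule ℂ H)
    (him : ∀ M y, y ∈ im M ↔ ∃ x : X, (x : H) ∈ M ∧ (g x : H) = y) :
    (∀ M N, im (M ⊓ N) = im M ⊓ im N) ∧
    (∀ M N, N ≤ X → im (M ⊓ Nᗮ) = im M ⊓ (im N)ᗮ) ∧
    (∀ M N, M ≤ X → N ≤ X → im M = im N → M = N) := by
  have hmem : ∀ M (x : X), (g x : H) ∈ im M ↔ (x : H) ∈ M := by
    intro M x
    rw [him]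
    constructor
    · rintro ⟨z, hz, e⟩
      rwa [← hg.1 (Subtype.ext e)]
    · intro h
      exact ⟨x, h, rfl⟩
  have key : ∀ M N K : Submodule ℂ H, (∀ x : X, (x : H) ∈ K ↔ (x : H) ∈ M ∧ (g x : H) ∈ N) →
      im K = im M ⊓ N := by
    intro M N K h
    ext y
    rw [Submodule.mem_inf, him, him]
    constructor
    · rintro ⟨x, hx, rfl⟩
      exact ⟨⟨x, ((h x).1 hx).1, rfl⟩, ((h x).1 hx).2⟩
    · rintro ⟨⟨x, hx, rfl⟩, h2⟩
      exact ⟨x, (h x).2 ⟨hx, h2⟩, rfl⟩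
  refine ⟨?_, ?_, ?_⟩
  · intro M N
    apply key
    intro x
    rw [hmem, Submodule.mem_inf]
  · intro M N hN
    apply key
    intro x
    rw [Submodule.mem_inf, Submodule.mem_orthogonal, Submodule.mem_orthogonal]
    refine and_congr_right fun _ => ?_
    constructor
    · intro h u hu
      obtain ⟨z, hz, rfl⟩ := (him _ _).1 hu
      exact (hi z x).2 (h z hz)
    · intro h u hu
      exact (hi ⟨u, hN hu⟩ x).1 (h _ ((hmem _ ⟨u, hN hu⟩).2 hu))
  · intro M N hM hN h
    ext y
    constructor
    · intro hy
      exact (hmem N ⟨y, hM hy⟩).1 (h ▸ (hmem M ⟨y, hM hy⟩).2 hy)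
    · intro hy
      exact (hmem M ⟨y, hN hy⟩).1 (h ▸ (hmem N ⟨y, hN hy⟩).2 hy)

theorem propsL13 (X X' : Submodule ℂ H) (U : ↥X ≃ₗᵢ[ℂ] ↥X') :
    (∀ M N, imL X X' U (M ⊓ N) = imL X X' U M ⊓ imL X X' U N) ∧
    (∀ M N, N ≤ X → imL X X' U (M ⊓ Nᗮ) = imL X X' U M ⊓ (imL X X' U N)ᗮ) ∧
    (∀ M N, M ≤ X → N ≤ X → imL X X' U M = imL X X' U N → M = N) := by
  refine props13 X X' U U.bijective (inner_zero13 U U.norm_map U.map_add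
    (Or.inl fun x => U.map_smul _ _)) _ ?_
  intro M y
  unfold imL
  constructor
  · rintro ⟨_, ⟨x, hx, rfl⟩, rfl⟩
    exact ⟨x, hx, rfl⟩
  · rintro ⟨x, hx, rfl⟩
    exact ⟨_, ⟨x, hx, rfl⟩, rfl⟩

theorem propsC13 (X X' : Submodule ℂ H) (U : ↥X ≃ₗᵢ⋆[ℂ] ↥X') :
    (∀ M N, imC X X' U (M ⊓ N) = imC X X' U M ⊓ imC X X' U N) ∧
    (∀ M N, N ≤ X → imC X X' U (M ⊓ Nᗮ) = imC X X' U M ⊓ (imC X X' U N)ᗮ) ∧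
    (∀ M N, M ≤ X → N ≤ X → imC X X' U M = imC X X' U N → M = N) := by
  refine props13 X X' U U.bijective (inner_zero13 U U.norm_map U.map_add
    (Or.inr fun x => ?_)) _ ?_
  · rw [U.map_smulₛₗ]; simp
  intro M y
  unfold imC
  constructor
  · rintro ⟨_, ⟨x, hx, rfl⟩, rfl⟩
    exact ⟨x, hx, rfl⟩
  · rintro ⟨x, hx, rfl⟩
    exact ⟨_, ⟨x, hx, rfl⟩, rfl⟩

/-- with `f` preserving ortho-adjacency in both directions, `X, Y ∈ G_∞(H)`
adjacent, `f` mapping `G¹(X)`, `G¹(Y)` onto `G¹(X')`, `G¹(Y')`, `U_X`, `U_Y` unitary or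
anti-unitary operators inducing `f` on these tops, and every star `S(P^⊥ ∩ X ∩ Y)` mapped by
`f` onto a star, we have `U_X(P) = U_Y(P)` for every one-dimensional subspace `P ⊆ X ∩ Y`. -/
theorem stmt13 (hH : ¬FiniteDimensional ℂ H)
    (f : Submodule ℂ H → Submodule ℂ H)
    (hbij : Set.BijOn f (Ginf (H := H)) (Ginf (H := H)))
    (hf : ∀ X ∈ Ginf (H := H), ∀ Y ∈ Ginf (H := H),
      OrthoAdjacent X Y ↔ OrthoAdjacent (f X) (f Y))
    (X Y X' Y' : Submodule ℂ H)
    (hX : X ∈ Ginf (H := H)) (hY : Y ∈ Ginf (H := H))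
    (hX' : X' ∈ Ginf (H := H)) (hY' : Y' ∈ Ginf (H := H))
    (hadj : Adjacent X Y)
    (htopX : f '' topSet X = topSet X') (htopY : f '' topSet Y = topSet Y')
    (hstar : ∀ P : Submodule ℂ H, finrank ℂ P = 1 → P ≤ X ⊓ Y →
      ∃ W ∈ Ginf (H := H), f '' starSet (Pᗮ ⊓ (X ⊓ Y)) = starSet W) :
    (∀ (UX : ↥X ≃ₗᵢ[ℂ] ↥X') (UY : ↥Y ≃ₗᵢ[ℂ] ↥Y'),
      (∀ M ∈ topSet X, f M = imL X X' UX M) → (∀ N ∈ topSet Y, f N = imL Y Y' UY N) →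
      ∀ P : Submodule ℂ H, finrank ℂ P = 1 → P ≤ X ⊓ Y →
        imL X X' UX P = imL Y Y' UY P) ∧
    (∀ (UX : ↥X ≃ₗᵢ[ℂ] ↥X') (UY : ↥Y ≃ₗᵢ⋆[ℂ] ↥Y'),
      (∀ M ∈ topSet X, f M = imL X X' UX M) → (∀ N ∈ topSet Y, f N = imC Y Y' UY N) →
      ∀ P : Submodule ℂ H, finrank ℂ P = 1 → P ≤ X ⊓ Y →
        imL X X' UX P = imC Y Y' UY P) ∧
    (∀ (UX : ↥X ≃ₗᵢ⋆[ℂ] ↥X') (UY : ↥Y ≃ₗᵢ[ℂ] ↥Y'),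
      (∀ M ∈ topSet X, f M = imC X X' UX M) → (∀ N ∈ topSet Y, f N = imL Y Y' UY N) →
      ∀ P : Submodule ℂ H, finrank ℂ P = 1 → P ≤ X ⊓ Y →
        imC X X' UX P = imL Y Y' UY P) ∧
    (∀ (UX : ↥X ≃ₗᵢ⋆[ℂ] ↥X') (UY : ↥Y ≃ₗᵢ⋆[ℂ] ↥Y'),
      (∀ M ∈ topSet X, f M = imC X X' UX M) → (∀ N ∈ topSet Y, f N = imC Y Y' UY N) →
      ∀ P : Submodule ℂ H, finrank ℂ P = 1 → P ≤ X ⊓ Y →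
        imC X X' UX P = imC Y Y' UY P) := by
  have main : ∀ i j : Submodule ℂ H → Submodule ℂ H,
      ((∀ M N, i (M ⊓ N) = i M ⊓ i N) ∧
        (∀ M N, N ≤ X → i (M ⊓ Nᗮ) = i M ⊓ (i N)ᗮ) ∧
        (∀ M N, M ≤ X → N ≤ X → i M = i N → M = N)) →
      ((∀ M N, j (M ⊓ N) = j M ⊓ j N) ∧
        (∀ M N, N ≤ Y → j (M ⊓ Nᗮ) = j M ⊓ (j N)ᗮ) ∧
        (∀ M N, M ≤ Y → N ≤ Y → j M = j N → M = N)) →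
      (∀ M ∈ topSet X, f M = i M) → (∀ N ∈ topSet Y, f N = j N) →
      ∀ P : Submodule ℂ H, finrank ℂ P = 1 → P ≤ X ⊓ Y → i P = j P := by
    intro i j hi hj hfi hfj P hP hPle
    obtain ⟨W, -, hW⟩ := hstar P hP hPle
    obtain ⟨p, hp0, hall⟩ := finrank_eq_one_iff'.1 hP
    have hPp : P = (ℂ ∙ (p : H)) := by
      apply le_antisymm
      · intro x hx
        obtain ⟨c, hc⟩ := hall ⟨x, hx⟩
        exact Submodule.mem_span_singleton.2 ⟨c, congrArg Subtype.val hc⟩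
      · rw [Submodule.span_singleton_le_iff_mem]; exact p.2
    have hp : (p : H) ≠ 0 := fun h => hp0 (Subtype.ext h)
    have hpZ : (p : H) ∈ X ⊓ Y := hPle p.2
    generalize (p : H) = q at *
    subst hPp
    have hZc : IsClosed ((X ⊓ Y : Submodule ℂ H) : Set H) := hX.1.inter hY.1
    rw [core13 f i X (X ⊓ Y) W hX.1 hZc hadj.1 hfi hi.1 hi.2.1 hi.2.2 q hp hpZ hW,
      core13 f j Y (X ⊓ Y) W hY.1 hZc hadj.2 hfj hj.1 hj.2.1 hj.2.2 q hp hpZ hW]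
  exact ⟨fun UX UY => main _ _ (propsL13 _ _ UX) (propsL13 _ _ UY),
    fun UX UY => main _ _ (propsL13 _ _ UX) (propsC13 _ _ UY),
    fun UX UY => main _ _ (propsC13 _ _ UX) (propsL13 _ _ UY),
    fun UX UY => main _ _ (propsC13 _ _ UX) (propsC13 _ _ UY)⟩
end
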